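/- arXiv:gr-qc/0010008 — 3 statements merged into one kernel-verified Lean document; each statement's English description precedes it below -/
import Mathlib

section
/- Critical limit law: at μ₁ = log 6, for all reals 0 ≤ a < b, P_{N, log 6}({m : a·√N ≤ m ≤ b·√N}) converges as N → ∞ along even integers to (∫_a^b √x · exp(−2x²/3) dx) / (∫_0^∞ √x · exp(−2x²/3) dx); i.e. m(N)/√N converges in distribution to the law on (0,∞) with density proportional to √x · exp(−2x²/3). -/
open Filter Real MeasureTheory

/-- Number of rooted quasitriangulations of a sphere with a hole with `N` triangles and
`m` boundary edges (Goulden–Jackson), with `j = (N - m)/2`. -/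
noncomputable def C0 (N m : ℕ) : ℝ :=
  (2 : ℝ) ^ ((N - m) / 2 + 2) * (Nat.factorial (2 * m + 3 * ((N - m) / 2) - 1) : ℝ) *
    (Nat.factorial (2 * m - 3) : ℝ) /
    ((Nat.factorial ((N - m) / 2 + 1) : ℝ) * (Nat.factorial (2 * m + 2 * ((N - m) / 2)) : ℝ) *
      ((Nat.factorial (m - 2) : ℝ)) ^ 2)

/-- The filter "N → ∞ along even integers". -/
def evenAtTop : Filter ℕ := Filter.atTop ⊓ Filter.principal {N | Even N}
/-- Weight of boundary length m: w_{μ₁}(N,m) = exp(-μ₁ m/2) C₀(N,m). -/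
noncomputable def w (μ₁ : ℝ) (N m : ℕ) : ℝ := Real.exp (-μ₁ * m / 2) * C0 N m

/-- Normalizing constant Θ_N(μ₁) = Σ_{m even, 2 ≤ m ≤ N} w_{μ₁}(N,m). -/
noncomputable def Θ (μ₁ : ℝ) (N : ℕ) : ℝ :=
  ∑ m ∈ (Finset.range (N + 1)).filter (fun m => Even m ∧ 2 ≤ m), w μ₁ N m

/-- Boundary-length distribution P_{N,μ₁}(m) = w_{μ₁}(N,m)/Θ_N(μ₁). -/
noncomputable def P (μ₁ : ℝ) (N m : ℕ) : ℝ := w μ₁ N m / Θ μ₁ N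

open scoped Classical


/-- step ratio -/
noncomputable def qq (n i : ℕ) : ℝ :=
  (4 / 3) * (3 * n + i) * (n + 1 - i) / ((2 * n + 2 * i + 1) * (2 * n + 2 * i + 2))

noncomputable def rr (n k : ℕ) : ℝ := ∏ i ∈ Finset.range k, qq n i

noncomputable def hh (n k : ℕ) : ℝ :=
  (Nat.factorial (3 * n + k - 1) : ℝ) /
    ((Nat.factorial (n + 1 - k) : ℝ) * (Nat.factorial (2 * n + 2 * k) : ℝ))

noncomputable def gg (k : ℕ) : ℝ :=
  (Nat.factorial (4 * k - 3) : ℝ) / (Nat.factorial (2 * k - 2) : ℝ) ^ 2 / 16 ^ k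

lemma hh_succ (n k : ℕ) (hn : 1 ≤ n) (hk : k ≤ n) :
    hh n (k + 1) = hh n k * ((3 / 4) * qq n k) := by
  obtain ⟨d, rfl⟩ := Nat.exists_eq_add_of_le hk
  obtain ⟨e, he⟩ : ∃ e, 3 * (k + d) + k = e + 1 := ⟨3 * (k + d) + k - 1, by omega⟩
  have heR : (3 * ((k : ℝ) + d) + k) = e + 1 := by exact_mod_cast he
  unfold hh qq
  have e1 : 3 * (k + d) + (k + 1) - 1 = e + 1 := by omega
  have e2 : 3 * (k + d) + k - 1 = e := by omega
  have e3 : k + d + 1 - (k + 1) = d := by omega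
  have e4 : k + d + 1 - k = d + 1 := by omega
  have e5 : 2 * (k + d) + 2 * (k + 1) = (2 * (k + d) + 2 * k + 1) + 1 := by omega
  rw [e1, e2, e3, e4, e5]
  simp only [Nat.factorial_succ]
  push_cast
  rw [heR]
  have h1 : (Nat.factorial d : ℝ) ≠ 0 := by positivity
  have h2 : (Nat.factorial (2 * (k + d) + 2 * k) : ℝ) ≠ 0 := by positivity
  have h3 : (2 * ((k : ℝ) + d) + 2 * k + 1) ≠ 0 := by positivity
  have h4 : (2 * ((k : ℝ) + d) + 2 * k + 2) ≠ 0 := by positivity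
  have h4' : (2 * ((k : ℝ) + d) + 2 * k + 1 + 1) ≠ 0 := by positivity
  have h5 : ((d : ℝ) + 1) ≠ 0 := by positivity
  have h6 : ((k : ℝ) + d + 1 - k) = d + 1 := by ring
  rw [h6]
  field_simp
  ring

lemma hh_eq (n k : ℕ) (hn : 1 ≤ n) (hk : k ≤ n + 1) :
    hh n k = hh n 0 * (3 / 4) ^ k * rr n k := by
  induction k with
  | zero => simp [rr]
  | succ k ih =>
    rw [hh_succ n k hn (by omega), ih (by omega)]
    unfold rr
    rw [Finset.prod_range_succ, pow_succ]
    ring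

lemma w_eq (n k : ℕ) (hn : 1 ≤ n) (hk1 : 1 ≤ k) (hk : k ≤ n) :
    w (Real.log 6) (2 * n) (2 * k) = (2 ^ (n + 2) * hh n 0) * (gg k * rr n k) := by
  have hw : w (Real.log 6) (2 * n) (2 * k) =
      (1 / 6) ^ k * (2 ^ (n - k + 2) * hh n k * (gg k * 16 ^ k)) := by
    have he : Real.exp (-Real.log 6 * ((2 * k : ℕ) : ℝ) / 2) = (1 / 6) ^ k := by
      have : -Real.log 6 * ((2 * k : ℕ) : ℝ) / 2 = k * Real.log (1 / 6) := by
        rw [one_div, Real.log_inv]; push_cast; ring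
      rw [this, Real.exp_nat_mul, Real.exp_log (by norm_num)]
    unfold w C0
    rw [he]
    have e0 : (2 * n - 2 * k) / 2 = n - k := by omega
    rw [e0]
    have e1 : 2 * (2 * k) + 3 * (n - k) - 1 = 3 * n + k - 1 := by omega
    have e2 : 2 * (2 * k) - 3 = 4 * k - 3 := by omega
    have e3 : n - k + 1 = n + 1 - k := by omega
    have e4 : 2 * (2 * k) + 2 * (n - k) = 2 * n + 2 * k := by omega
    rw [e1, e2, e3, e4]
    unfold hh gg
    have h1 : (Nat.factorial (n + 1 - k) : ℝ) ≠ 0 := by positivity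
    have h2 : (Nat.factorial (2 * n + 2 * k) : ℝ) ≠ 0 := by positivity
    have h3 : (Nat.factorial (2 * k - 2) : ℝ) ≠ 0 := by positivity
    field_simp
  rw [hw, hh_eq n k hn (by omega)]
  have h2 : (2 : ℝ) ^ (n + 2) = 2 ^ (n - k + 2) * 2 ^ k := by
    rw [← pow_add]; congr 1; omega
  rw [h2]
  have h3 : ((1 : ℝ) / 6) ^ k * (3 / 4) ^ k * 16 ^ k = 2 ^ k := by
    rw [← mul_pow, ← mul_pow]; norm_num
  linear_combination (2 ^ (n - k + 2) * hh n 0 * rr n k * gg k) * h3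

lemma qq_eq (n i : ℕ) (hn : 1 ≤ n) :
    qq n i = (1 + i / (3 * n)) * (1 + (1 - i) / n) / ((1 + (2 * i + 1) / (2 * n)) * (1 + (i + 1) / n)) := by
  have : (n : ℝ) ≠ 0 := by positivity
  have h1 : (2 * (n : ℝ) + 2 * i + 1) ≠ 0 := by positivity
  have h2 : (2 * (n : ℝ) + 2 * i + 2) ≠ 0 := by positivity
  have h3 : (1 + (2 * (i : ℝ) + 1) / (2 * n)) ≠ 0 := by positivity
  have h4 : (1 + ((i : ℝ) + 1) / n) ≠ 0 := by positivity
  unfold qq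
  rw [div_eq_div_iff (by positivity) (by positivity)]
  field_simp
  ring

lemma qq_nonneg (n i : ℕ) (hi : i ≤ n) : 0 ≤ qq n i := by
  have : (i : ℝ) ≤ n := by exact_mod_cast hi
  have : (0 : ℝ) ≤ n + 1 - i := by linarith
  unfold qq
  positivity

lemma qq_le (n i : ℕ) (hn : 1 ≤ n) (hi : i ≤ n) : qq n i ≤ Real.exp ((1 - i) / n) := by
  have hi' : (i : ℝ) ≤ n := by exact_mod_cast hi
  have hn' : (0 : ℝ) < n := by positivity
  have h1 : (0 : ℝ) ≤ 1 + (1 - i) / n := by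
    have : 1 + (1 - (i : ℝ)) / n = (n + 1 - i) / n := by field_simp; ring
    rw [this]
    apply div_nonneg <;> linarith
  have h2 : qq n i ≤ 1 + (1 - i) / n := by
    rw [qq_eq n i hn, div_le_iff₀ (by positivity), mul_comm (1 + (i : ℝ) / (3 * n))]
    apply mul_le_mul_of_nonneg_left _ h1
    have h3 : (1 + (i : ℝ) / (3 * n)) ≤ (1 + ((i : ℝ) + 1) / n) := by
      have : (i : ℝ) / (3 * n) ≤ ((i : ℝ) + 1) / n := by
        apply div_le_div₀ <;> linarith
      linarith
    have h4 : (1 : ℝ) ≤ (1 + (2 * i + 1) / (2 * n)) := by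
      have : (0 : ℝ) ≤ (2 * i + 1) / (2 * n) := by positivity
      linarith
    have h5 : (0 : ℝ) ≤ (1 + ((i : ℝ) + 1) / n) := by positivity
    nlinarith
  have := Real.add_one_le_exp ((1 - (i : ℝ)) / n)
  linarith

lemma rr_nonneg (n k : ℕ) (hk : k ≤ n) : 0 ≤ rr n k := by
  unfold rr
  apply Finset.prod_nonneg
  intro i hi
  rw [Finset.mem_range] at hi
  exact qq_nonneg n i (by omega)

lemma rr_le (n k : ℕ) (hn : 1 ≤ n) (hk : k ≤ n) :
    rr n k ≤ Real.exp (3 / 2 - k ^ 2 / (2 * n)) := by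
  have h1 : rr n k ≤ Real.exp ((3 * k - k ^ 2) / (2 * n)) := by
    induction k with
    | zero => simp [rr]
    | succ k ih =>
      have hq := qq_le n k hn (by omega)
      have hq0 := qq_nonneg n k (by omega)
      have : rr n (k + 1) = rr n k * qq n k := by unfold rr; rw [Finset.prod_range_succ]
      rw [this]
      calc rr n k * qq n k ≤ _ := mul_le_mul (ih (by omega)) hq hq0 (Real.exp_nonneg _)
        _ = _ := by
          rw [← Real.exp_add]
          congr 1
          have : (n : ℝ) ≠ 0 := by positivity
          push_cast
          field_simp
          ring
  refine h1.trans (Real.exp_le_exp.mpr ?_)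
  have hn' : (0 : ℝ) < n := by positivity
  have hk' : (k : ℝ) ≤ n := by exact_mod_cast hk
  have : 3 * (k : ℝ) / (2 * n) ≤ 3 / 2 := by
    rw [div_le_div_iff₀ (by positivity) (by positivity)]; nlinarith
  rw [sub_div]
  linarith

open Topology in
lemma cb_tendsto : Tendsto (fun n : ℕ => (Nat.factorial (2 * n) : ℝ) / (Nat.factorial n : ℝ) ^ 2 *
    √n / 4 ^ n) atTop (𝓝 (√π / √π ^ 2)) := by
  have h := Stirling.tendsto_stirlingSeq_sqrt_pi
  have h2 : Tendsto (fun n : ℕ => Stirling.stirlingSeq (2 * n)) atTop (𝓝 √π) :=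
    h.comp (tendsto_id.const_mul_atTop' (by norm_num))
  have h3 := h2.div (h.pow 2) (by positivity)
  refine h3.congr' ?_
  filter_upwards [eventually_ge_atTop 1] with n hn
  have hn' : (0 : ℝ) < n := by positivity
  simp only [Pi.div_apply, Stirling.stirlingSeq]
  have hs : √(2 * ((2 * n : ℕ) : ℝ)) = 2 * √n := by
    push_cast
    rw [show 2 * (2 * (n : ℝ)) = 2 ^ 2 * n by ring, Real.sqrt_mul (by positivity),
      Real.sqrt_sq (by norm_num)]
  have hs2 : √(2 * (n : ℝ)) ^ 2 = 2 * n := Real.sq_sqrt (by positivity)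
  have hs3 : √(n : ℝ) ^ 2 = n := Real.sq_sqrt (by positivity)
  have hs4 : √(n : ℝ) ≠ 0 := by positivity
  have hp : (((2 * n : ℕ) : ℝ) / Real.exp 1) ^ (2 * n) = 4 ^ n * (((n : ℝ) / Real.exp 1) ^ n) ^ 2 := by
    push_cast
    rw [mul_div_assoc, mul_pow, pow_mul, ← pow_mul _ n 2, mul_comm n 2]
    norm_num
  have hx : (((n : ℝ) / Real.exp 1) ^ n) ≠ 0 := by positivity
  rw [hs, hp]
  generalize (((n : ℝ) / Real.exp 1) ^ n) = X at *
  rw [div_pow, mul_pow, hs2]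
  have hf : (Nat.factorial n : ℝ) ≠ 0 := by positivity
  field_simp
  rw [hs3]

open Topology in
lemma gg_tendsto : ∃ c : ℝ, 0 < c ∧ Tendsto (fun k : ℕ => gg k / √k) atTop (𝓝 c) := by
  have h0 : Tendsto (fun j : ℕ => 2 * j) atTop atTop := tendsto_id.const_mul_atTop' (by norm_num)
  have h1 := cb_tendsto.comp h0
  have hinv : Tendsto (fun j : ℕ => (1 : ℝ) / j) atTop (𝓝 0) := tendsto_one_div_atTop_nhds_zero_nat
  have h2 : Tendsto (fun j : ℕ => (4 + (1 : ℝ) / j) / (16 * √2 * √(1 + 1 / j))) atTop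
      (𝓝 ((4 + 0) / (16 * √2 * √(1 + 0)))) := by
    refine (hinv.const_add 4).div ((hinv.const_add 1).sqrt.const_mul _) ?_
    simp
  refine ⟨_, ?_, (tendsto_add_atTop_iff_nat 1).mp ((h1.mul h2).congr' ?_)⟩
  · simp; positivity
  · filter_upwards [eventually_ge_atTop 1] with j hj
    have hj' : (0 : ℝ) < j := by positivity
    simp only [Function.comp, gg]
    have e1 : 4 * (j + 1) - 3 = (2 * (2 * j)) + 1 := by omega
    have e2 : 2 * (j + 1) - 2 = 2 * j := by omega
    rw [e1, e2, Nat.factorial_succ]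
    have hs : √(1 + 1 / (j : ℝ)) = √((j + 1 : ℕ) : ℝ) / √j := by
      rw [← Real.sqrt_div (by positivity)]; congr 1; push_cast; field_simp
    have hs2 : √((2 * j : ℕ) : ℝ) = √2 * √j := by push_cast; rw [Real.sqrt_mul (by norm_num)]
    rw [hs, hs2, pow_mul, pow_succ]
    have a1 : √(j : ℝ) ≠ 0 := by positivity
    have a2 : √((j + 1 : ℕ) : ℝ) ≠ 0 := by positivity
    have a3 : √(2 : ℝ) ≠ 0 := by positivity
    have a4 : (Nat.factorial (2 * j) : ℝ) ≠ 0 := by positivity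
    have hs3 : √(j : ℝ) ^ 2 = j := Real.sq_sqrt (by positivity)
    generalize √((j + 1 : ℕ) : ℝ) = Y at *
    generalize (Nat.factorial (2 * j) : ℝ) = F at *
    have : ((4 : ℝ) ^ 2) ^ j = 16 ^ j := by norm_num
    rw [this]
    push_cast
    generalize (Nat.factorial (2 * (2 * j)) : ℝ) = G at *
    field_simp
    rw [hs3]
    ring

lemma abs_log_le (x : ℝ) (hx : |x| ≤ 1 / 2) : |Real.log (1 + x) - x| ≤ 2 * x ^ 2 := by
  have h := Real.abs_log_sub_add_sum_range_le (x := -x) (by rw [abs_neg]; linarith) 1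
  simp at h
  have e : -x + Real.log (1 + x) = Real.log (1 + x) - x := by ring
  rw [e] at h
  refine h.trans ?_
  rw [div_le_iff₀ (by linarith)]
  nlinarith [sq_nonneg x]

open Topology in
lemma rr_tendsto (k : ℕ → ℕ) (y : ℝ)
    (hk : Tendsto (fun n : ℕ => (k n : ℝ) / √n) atTop (𝓝 y)) :
    Tendsto (fun n => rr n (k n)) atTop (𝓝 (Real.exp (-(4 * y ^ 2 / 3)))) := by
  have hsq : Tendsto (fun n : ℕ => √(n : ℝ)) atTop atTop :=
    Real.tendsto_sqrt_atTop.comp tendsto_natCast_atTop_atTop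
  have hsi : Tendsto (fun n : ℕ => (√(n : ℝ))⁻¹) atTop (𝓝 0) := hsq.inv_tendsto_atTop
  -- k / n → 0
  have hkn : Tendsto (fun n : ℕ => ((k n : ℝ) + 1) / n) atTop (𝓝 0) := by
    have := (hk.mul hsi).add (hsi.mul hsi)
    simp only [mul_zero, add_zero] at this
    refine this.congr' ?_
    filter_upwards [eventually_ge_atTop 1] with n hn
    have hn' : (0 : ℝ) < n := by positivity
    have hs3 : √(n : ℝ) ^ 2 = n := Real.sq_sqrt (by positivity)
    have : √(n : ℝ) ≠ 0 := by positivity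
    generalize √(n : ℝ) = s at hs3 this ⊢
    rw [← hs3]; field_simp
  have hk2 : Tendsto (fun n : ℕ => -(4 / 3 * (k n : ℝ) * (k n - 1) + k n / 2) / n) atTop
      (𝓝 (-(4 * y ^ 2 / 3))) := by
    have := ((hk.mul hk).const_mul (-(4 / 3))).add ((hk.mul hsi).const_mul (5 / 6))
    refine (this.congr' ?_).trans_eq ?_
    · filter_upwards [eventually_ge_atTop 1] with n hn
      have hn' : (0 : ℝ) < n := by positivity
      have hs3 : √(n : ℝ) ^ 2 = n := Real.sq_sqrt (by positivity)
      have : √(n : ℝ) ≠ 0 := by positivity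
      generalize √(n : ℝ) = s at hs3 this ⊢
      rw [← hs3]; field_simp
      ring
    · congr 1; ring
  -- error
  have herr : Tendsto (fun n : ℕ => 8 * (k n : ℝ) * (((k n : ℝ) + 1) / n) ^ 2) atTop (𝓝 0) := by
    have h1 : Tendsto (fun n : ℕ => ((k n : ℝ) / √n) * ((k n : ℝ) / √n + (√n)⁻¹) * (((k n : ℝ) + 1) / n) * 8)
        atTop (𝓝 (y * (y + 0) * 0 * 8)) :=
      ((hk.mul (hk.add hsi)).mul hkn).mul_const 8
    simp only [mul_zero, zero_mul] at h1
    refine h1.congr' ?_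
    filter_upwards [eventually_ge_atTop 1] with n hn
    have hn' : (0 : ℝ) < n := by positivity
    have hs3 : √(n : ℝ) ^ 2 = n := Real.sq_sqrt (by positivity)
    have : √(n : ℝ) ≠ 0 := by positivity
    generalize √(n : ℝ) = s at hs3 this ⊢
    rw [← hs3]; field_simp
  have hsmall : ∀ᶠ n : ℕ in atTop, ((k n : ℝ) + 1) / n < 1 / 2 :=
    hkn.eventually (gt_mem_nhds (by norm_num))
  have key : ∀ᶠ n : ℕ in atTop, 0 < rr n (k n) ∧
      |Real.log (rr n (k n)) - (-(4 / 3 * (k n : ℝ) * (k n - 1) + k n / 2) / n)| ≤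
        8 * (k n : ℝ) * (((k n : ℝ) + 1) / n) ^ 2 := by
    filter_upwards [hsmall, eventually_ge_atTop 1] with n hs hn
    have hn' : (0 : ℝ) < n := by positivity
    set δ := ((k n : ℝ) + 1) / n with hδ
    have hδ0 : 0 ≤ δ := by positivity
    have hstep : ∀ i < k n, 0 < qq n i ∧
        |Real.log (qq n i) - (-(8 / 3 * i + 1 / 2) / n)| ≤ 8 * δ ^ 2 := by
      intro i hi
      have hi' : (i : ℝ) + 1 ≤ k n := by exact_mod_cast hi
      have hi0 : (0 : ℝ) ≤ i := by positivity
      have b : ∀ z : ℝ, |z| ≤ k n + 1 → |z / n| ≤ δ := by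
        intro z hz
        rw [abs_div, abs_of_pos hn']
        exact div_le_div_of_nonneg_right hz hn'.le
      have b1 : |(i : ℝ) / (3 * n)| ≤ δ := by
        have := b (i / 3) (by rw [abs_of_nonneg (by positivity)]; linarith)
        rwa [div_div] at this
      have b2 : |(1 - (i : ℝ)) / n| ≤ δ := b _ (by rw [abs_le]; constructor <;> linarith)
      have b3 : |(2 * (i : ℝ) + 1) / (2 * n)| ≤ δ := by
        have := b ((2 * i + 1) / 2) (by rw [abs_of_nonneg (by positivity)]; linarith)
        rwa [div_div] at this
      have b4 : |((i : ℝ) + 1) / n| ≤ δ := b _ (by rw [abs_of_nonneg (by positivity)]; linarith)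
      have L : ∀ z : ℝ, |z| ≤ δ → 0 < 1 + z ∧ |Real.log (1 + z) - z| ≤ 2 * δ ^ 2 := by
        intro z hz
        have := abs_le.mp hz
        refine ⟨by linarith, (abs_log_le z (by linarith)).trans ?_⟩
        have := sq_le_sq' this.1 this.2
        linarith
      obtain ⟨p1, l1⟩ := L _ b1
      obtain ⟨p2, l2⟩ := L _ b2
      obtain ⟨p3, l3⟩ := L _ b3
      obtain ⟨p4, l4⟩ := L _ b4
      rw [qq_eq n i hn]
      refine ⟨by positivity, ?_⟩
      rw [Real.log_div (by positivity) (by positivity), Real.log_mul p1.ne' p2.ne',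
        Real.log_mul p3.ne' p4.ne']
      have lin : -(8 / 3 * (i : ℝ) + 1 / 2) / n = i / (3 * n) + (1 - i) / n - (2 * i + 1) / (2 * n)
        - (i + 1) / n := by
        field_simp; ring
      rw [lin]
      rw [abs_le] at *
      constructor <;> linarith [l1.1, l1.2, l2.1, l2.2, l3.1, l3.2, l4.1, l4.2]
    have hind : ∀ j ≤ k n, 0 < rr n j ∧
      |Real.log (rr n j) - (-(4 / 3 * (j : ℝ) * (j - 1) + j / 2) / n)| ≤ 8 * j * δ ^ 2 := by
      intro j
      induction j with
      | zero => intro _; simp [rr]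
      | succ j ih =>
        intro hj
        obtain ⟨i1, i2⟩ := ih (by omega)
        obtain ⟨s1, s2⟩ := hstep j (by omega)
        have e : rr n (j + 1) = rr n j * qq n j := by unfold rr; rw [Finset.prod_range_succ]
        rw [e]
        refine ⟨by positivity, ?_⟩
        rw [Real.log_mul i1.ne' s1.ne']
        have lin : -(4 / 3 * ((j + 1 : ℕ) : ℝ) * ((j + 1 : ℕ) - 1) + (j + 1 : ℕ) / 2) / n =
          (-(4 / 3 * (j : ℝ) * (j - 1) + j / 2) / n) + (-(8 / 3 * j + 1 / 2) / n) := by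
          push_cast; field_simp; ring
        rw [lin]
        push_cast
        rw [abs_le] at *
        constructor <;> linarith [i2.1, i2.2, s2.1, s2.2]
    exact hind (k n) le_rfl
  have hlog : Tendsto (fun n => Real.log (rr n (k n))) atTop (𝓝 (-(4 * y ^ 2 / 3))) := by
    have hd : Tendsto (fun n : ℕ => Real.log (rr n (k n)) -
        (-(4 / 3 * (k n : ℝ) * (k n - 1) + k n / 2) / n)) atTop (𝓝 0) :=
      squeeze_zero_norm' (key.mono fun n h => h.2) herr
    have := hd.add hk2
    simpa using this
  refine ((Real.continuous_exp.tendsto _).comp hlog).congr' ?_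
  filter_upwards [key] with n hn
  exact Real.exp_log hn.1

lemma sum_eq_integral (G : ℕ → ℝ) (n : ℕ) :
    ∑ k ∈ Finset.range n, G (k + 1) = ∫ t in (0 : ℝ)..n, G ⌈t⌉₊ := by
  have hc : ∀ k : ℕ, Set.EqOn (fun t : ℝ => G ⌈t⌉₊) (fun _ => G (k + 1))
      (Set.uIoc (k : ℝ) ((k + 1 : ℕ) : ℝ)) := by
    intro k t ht
    rw [Set.uIoc_of_le (by push_cast; linarith)] at ht
    have : ⌈t⌉₊ = k + 1 := by
      rw [Nat.ceil_eq_iff (by omega)]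
      exact ⟨by simpa using ht.1, ht.2⟩
    simp only [this]
  have h1 : ∀ k : ℕ, ∫ t in (k : ℝ)..((k + 1 : ℕ) : ℝ), G ⌈t⌉₊ = G (k + 1) := by
    intro k
    rw [intervalIntegral.integral_congr_ae (ae_of_all _ fun x hx => hc k hx)]
    simp
  have h2 := intervalIntegral.sum_integral_adjacent_intervals (μ := volume)
    (f := fun t : ℝ => G ⌈t⌉₊) (a := fun k : ℕ => (k : ℝ)) (n := n) (by
      intro k _
      exact (intervalIntegrable_const (c := G (k + 1))).congr (hc k).symm)
  simp only [Nat.cast_zero] at h2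
  rw [← h2]
  exact Finset.sum_congr rfl fun k _ => (h1 k).symm

/-- rescaled integrand -/
noncomputable def ff (I : Set ℝ) (n : ℕ) : ℝ → ℝ :=
  (Set.Ioc 0 √(2 * (n : ℝ))).indicator (fun x =>
    (I.indicator (fun _ => (1 : ℝ)) (2 * (⌈√(2 * (n : ℝ)) / 2 * x⌉₊ : ℝ) / √(2 * (n : ℝ))) *
      (gg ⌈√(2 * (n : ℝ)) / 2 * x⌉₊ * rr n ⌈√(2 * (n : ℝ)) / 2 * x⌉₊)) / √√(2 * (n : ℝ)))

lemma ff_integral (I : Set ℝ) (n : ℕ) (hn : 1 ≤ n) :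
    ∫ x in Set.Ioi (0 : ℝ), ff I n x =
    (∑ k ∈ Finset.range n, I.indicator (fun _ => (1 : ℝ)) (2 * ((k + 1 : ℕ) : ℝ) / √(2 * (n : ℝ))) *
      (gg (k + 1) * rr n (k + 1))) / (√(2 * (n : ℝ)) / 2 * √√(2 * (n : ℝ))) := by
  rw [sum_eq_integral (fun k => I.indicator (fun _ => (1 : ℝ)) (2 * (k : ℝ) / √(2 * (n : ℝ))) *
      (gg k * rr n k))]
  have hn' : (0 : ℝ) < n := by positivity
  have hs : 0 < √(2 * (n : ℝ)) := by positivity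
  have hs2 : √(2 * (n : ℝ)) ^ 2 = 2 * n := Real.sq_sqrt (by positivity)
  unfold ff
  rw [setIntegral_indicator measurableSet_Ioc]
  have : Set.Ioi 0 ∩ Set.Ioc 0 √(2 * (n : ℝ)) = Set.Ioc 0 √(2 * (n : ℝ)) := by
    ext x; simp
  rw [this, ← intervalIntegral.integral_of_le hs.le, intervalIntegral.integral_div]
  generalize √(2 * (n : ℝ)) = s at *
  have hsn : s / 2 * s = n := by nlinarith
  rw [intervalIntegral.integral_comp_mul_left (fun t : ℝ =>
    I.indicator (fun _ => (1 : ℝ)) (2 * (⌈t⌉₊ : ℝ) / s) * (gg ⌈t⌉₊ * rr n ⌈t⌉₊)) (by positivity)]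
  rw [hsn, mul_zero, smul_eq_mul]
  field_simp

lemma ff_meas (I : Set ℝ) (n : ℕ) : Measurable (ff I n) := by
  unfold ff
  refine Measurable.indicator ?_ measurableSet_Ioc
  have : Measurable (fun k : ℕ => (I.indicator (fun _ => (1 : ℝ)) (2 * (k : ℝ) / √(2 * (n : ℝ))) *
      (gg k * rr n k)) / √√(2 * (n : ℝ))) := measurable_from_nat
  exact this.comp (Nat.measurable_ceil.comp (measurable_const.mul measurable_id))

lemma ff_bound (I : Set ℝ) (C : ℝ) (hC : ∀ k : ℕ, |gg k / √k| ≤ C) (n : ℕ) (x : ℝ) (hx : 0 < x) :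
    ‖ff I n x‖ ≤ C * Real.exp (3 / 2) * (x * Real.exp (-(1 / 4) * x ^ 2) + Real.exp (-(1 / 4) * x ^ 2)) := by
  have hC0 : 0 ≤ C := (abs_nonneg _).trans (hC 0)
  unfold ff
  by_cases hm : x ∈ Set.Ioc 0 √(2 * (n : ℝ))
  swap
  · rw [Set.indicator_of_notMem hm, norm_zero]; positivity
  rw [Set.indicator_of_mem hm]
  have hn : 1 ≤ n := by
    rcases Nat.eq_zero_or_pos n with h | h
    · subst h; simp at hm
    · exact h
  have hn' : (1 : ℝ) ≤ n := by exact_mod_cast hn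
  have hs2 : √(2 * (n : ℝ)) ^ 2 = 2 * n := Real.sq_sqrt (by positivity)
  have hs1 : 1 ≤ √(2 * (n : ℝ)) := by
    rw [Real.one_le_sqrt]; linarith
  generalize √(2 * (n : ℝ)) = s at *
  have hK1 : s / 2 * x ≤ (⌈s / 2 * x⌉₊ : ℝ) := Nat.le_ceil _
  have hK2 : (⌈s / 2 * x⌉₊ : ℝ) < s / 2 * x + 1 := Nat.ceil_lt_add_one (by positivity)
  have hK3 : ⌈s / 2 * x⌉₊ ≤ n := by
    rw [Nat.ceil_le]; nlinarith [hm.2]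
  have hK4 : 0 < ⌈s / 2 * x⌉₊ := Nat.ceil_pos.mpr (by positivity)
  generalize ⌈s / 2 * x⌉₊ = K at *
  have hK0 : (0 : ℝ) < K := by exact_mod_cast hK4
  have hr0 := rr_nonneg n K hK3
  have hr := rr_le n K hn hK3
  have hr' : rr n K ≤ Real.exp (3 / 2) * Real.exp (-(1 / 4) * x ^ 2) := by
    refine hr.trans ?_
    rw [← Real.exp_add]
    apply Real.exp_le_exp.mpr
    have : x ^ 2 / 4 ≤ (K : ℝ) ^ 2 / (2 * n) := by
      rw [← hs2, le_div_iff₀ (by positivity)]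
      have := pow_le_pow_left₀ (by positivity) hK1 2
      linarith
    linarith
  have hg : |gg K| / √s ≤ C * (x + 1) := by
    have h1 := hC K
    rw [abs_div, abs_of_nonneg (Real.sqrt_nonneg _), div_le_iff₀ (by positivity)] at h1
    rw [div_le_iff₀ (by positivity)]
    refine h1.trans ?_
    rw [mul_assoc]
    apply mul_le_mul_of_nonneg_left _ hC0
    have h2 : (K : ℝ) ≤ (x + 1) ^ 2 * s := by nlinarith [mul_pos hx (show 0 < s by linarith)]
    calc √(K : ℝ) ≤ √((x + 1) ^ 2 * s) := Real.sqrt_le_sqrt h2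
      _ = (x + 1) * √s := by
        rw [Real.sqrt_mul (by positivity), Real.sqrt_sq (by positivity)]
  have hi : |I.indicator (fun _ => (1 : ℝ)) (2 * (K : ℝ) / s)| ≤ 1 := by
    by_cases h : (2 * (K : ℝ) / s) ∈ I <;> simp [h]
  rw [Real.norm_eq_abs, abs_div, abs_mul, abs_mul, abs_of_nonneg hr0, abs_of_nonneg (Real.sqrt_nonneg s)]
  calc _ ≤ 1 * (|gg K| * rr n K) / √s := by gcongr
    _ = |gg K| / √s * rr n K := by ring
    _ ≤ C * (x + 1) * (Real.exp (3 / 2) * Real.exp (-(1 / 4) * x ^ 2)) := by gcongr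
    _ = _ := by ring

open Topology in
lemma ff_lim (I : Set ℝ) (c : ℝ) (hg : Tendsto (fun k : ℕ => gg k / √k) atTop (𝓝 c)) (x : ℝ) (hx : 0 < x)
    (hI : ContinuousAt (I.indicator (fun _ => (1 : ℝ))) x) :
    Tendsto (fun n => ff I n x) atTop (𝓝 (c / √2 * (I.indicator (fun _ => (1 : ℝ)) x *
      (√x * Real.exp (-2 * x ^ 2 / 3))))) := by
  have hs : Tendsto (fun n : ℕ => √(2 * (n : ℝ))) atTop atTop :=
    Real.tendsto_sqrt_atTop.comp (tendsto_natCast_atTop_atTop.const_mul_atTop (by norm_num))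
  have hK : Tendsto (fun n : ℕ => (⌈√(2 * (n : ℝ)) / 2 * x⌉₊ : ℝ) / √(2 * (n : ℝ))) atTop (𝓝 (x / 2)) := by
    have := (tendsto_nat_ceil_mul_div_atTop (R := ℝ) (a := x / 2) (by positivity)).comp hs
    refine this.congr fun n => ?_
    simp only [Function.comp]
    rw [show x / 2 * √(2 * (n : ℝ)) = √(2 * (n : ℝ)) / 2 * x by ring]
  have hKinf : Tendsto (fun n : ℕ => ⌈√(2 * (n : ℝ)) / 2 * x⌉₊) atTop atTop :=
    tendsto_nat_ceil_atTop.comp ((hs.atTop_div_const (by norm_num)).atTop_mul_const hx)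
  have h1 : Tendsto (fun n : ℕ => I.indicator (fun _ => (1 : ℝ))
      (2 * (⌈√(2 * (n : ℝ)) / 2 * x⌉₊ : ℝ) / √(2 * (n : ℝ)))) atTop
      (𝓝 (I.indicator (fun _ => (1 : ℝ)) x)) := by
    refine hI.tendsto.comp ?_
    have := hK.const_mul 2
    rw [show 2 * (x / 2) = x by ring] at this
    exact this.congr fun n => by ring
  have h2 := hg.comp hKinf
  have h3 := hK.sqrt
  have h4 : Tendsto (fun n : ℕ => rr n ⌈√(2 * (n : ℝ)) / 2 * x⌉₊) atTop
      (𝓝 (Real.exp (-(4 * (x / 2 * √2) ^ 2 / 3)))) := by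
    refine rr_tendsto (fun n : ℕ => ⌈√(2 * (n : ℝ)) / 2 * x⌉₊) _ ?_
    refine (hK.mul_const √2).congr' ?_
    filter_upwards [eventually_ge_atTop 1] with n hn
    have hn' : (0 : ℝ) < n := by positivity
    have a1 : √(n : ℝ) ≠ 0 := by positivity
    have a2 : √(2 : ℝ) ≠ 0 := by positivity
    generalize (⌈√(2 * (n : ℝ)) / 2 * x⌉₊ : ℝ) = K
    rw [Real.sqrt_mul (by norm_num)]
    field_simp
  have h5 := h1.mul ((h2.mul h3).mul h4)
  have e : I.indicator (fun _ => (1 : ℝ)) x * (c * √(x / 2) * Real.exp (-(4 * (x / 2 * √2) ^ 2 / 3))) =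
      c / √2 * (I.indicator (fun _ => (1 : ℝ)) x * (√x * Real.exp (-2 * x ^ 2 / 3))) := by
    rw [mul_pow, Real.sq_sqrt (by norm_num), Real.sqrt_div hx.le,
      show -(4 * ((x / 2) ^ 2 * 2) / 3) = -2 * x ^ 2 / 3 by ring]
    ring
  rw [e] at h5
  refine h5.congr' ?_
  filter_upwards [hs.eventually_ge_atTop x, eventually_ge_atTop 1] with n hnx hn
  have hn' : (0 : ℝ) < n := by positivity
  have hs0 : 0 < √(2 * (n : ℝ)) := by positivity
  have hK4 : 0 < ⌈√(2 * (n : ℝ)) / 2 * x⌉₊ := Nat.ceil_pos.mpr (by positivity)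
  unfold ff
  rw [Set.indicator_of_mem (Set.mem_Ioc.mpr ⟨hx, hnx⟩)]
  simp only [Function.comp]
  generalize √(2 * (n : ℝ)) = s at *
  generalize ⌈s / 2 * x⌉₊ = K at *
  have hK0 : (0 : ℝ) < K := by exact_mod_cast hK4
  rw [Real.sqrt_div hK0.le]
  have a1 : √(K : ℝ) ≠ 0 := by positivity
  have a2 : √s ≠ 0 := by positivity
  field_simp

open Topology in
lemma main_lim (I : Set ℝ) (c : ℝ) (hg : Tendsto (fun k : ℕ => gg k / √k) atTop (𝓝 c))
    (hI : ∀ᵐ x : ℝ, ContinuousAt (I.indicator (fun _ => (1 : ℝ))) x) :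
    Tendsto (fun n : ℕ => (∑ k ∈ Finset.range n,
      I.indicator (fun _ => (1 : ℝ)) (2 * ((k + 1 : ℕ) : ℝ) / √(2 * (n : ℝ))) *
      (gg (k + 1) * rr n (k + 1))) / (√(2 * (n : ℝ)) / 2 * √√(2 * (n : ℝ)))) atTop
    (𝓝 (c / √2 * ∫ x in Set.Ioi (0 : ℝ), I.indicator (fun _ => (1 : ℝ)) x *
      (√x * Real.exp (-2 * x ^ 2 / 3)))) := by
  obtain ⟨C, hC⟩ := (hg.abs).bddAbove_range
  have hC' : ∀ k : ℕ, |gg k / √k| ≤ C := fun k => hC ⟨k, rfl⟩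
  rw [← integral_const_mul]
  have := tendsto_integral_of_dominated_convergence (μ := volume.restrict (Set.Ioi (0 : ℝ)))
    (F := ff I) (f := fun x => c / √2 * (I.indicator (fun _ => (1 : ℝ)) x *
      (√x * Real.exp (-2 * x ^ 2 / 3))))
    (fun x => C * Real.exp (3 / 2) * (x * Real.exp (-(1 / 4) * x ^ 2) + Real.exp (-(1 / 4) * x ^ 2)))
    (fun n => (ff_meas I n).aestronglyMeasurable)
    (((integrable_mul_exp_neg_mul_sq (by norm_num)).add
      (integrable_exp_neg_mul_sq (by norm_num))).const_mul _).integrableOn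
    (fun n => by
      filter_upwards [ae_restrict_mem measurableSet_Ioi] with x hx
      exact ff_bound I C hC' n x hx)
    (by
      filter_upwards [ae_restrict_mem measurableSet_Ioi, ae_restrict_of_ae hI] with x hx hx2
      exact ff_lim I c hg x hx hx2)
  refine this.congr' ?_
  filter_upwards [eventually_ge_atTop 1] with n hn
  exact ff_integral I n hn

lemma sum_reindex (n : ℕ) (p : ℕ → Prop) (S : Finset ℕ)
    (hS : ∀ m, m ∈ S ↔ (m < 2 * n + 1 ∧ Even m ∧ 2 ≤ m ∧ p m)) (W : ℕ → ℝ) :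
    ∑ m ∈ S, W m = ∑ k ∈ Finset.range n, if p (2 * (k + 1)) then W (2 * (k + 1)) else 0 := by
  rw [← Finset.sum_filter]
  symm
  refine Finset.sum_nbij (fun k => 2 * (k + 1)) ?_ ?_ ?_ ?_
  · intro k hk
    simp only [Finset.mem_filter, Finset.mem_range] at hk
    rw [hS]
    exact ⟨by omega, even_two_mul _, by omega, hk.2⟩
  · intro k _ l _ h
    simp only at h
    omega
  · intro m hm
    rw [Finset.mem_coe, hS] at hm
    obtain ⟨h1, ⟨k, hk⟩, h3, h4⟩ := hm
    have hk' : 2 * (k - 1 + 1) = m := by omega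
    refine ⟨k - 1, ?_, hk'⟩
    simp only [Finset.coe_filter, Finset.mem_range, Set.mem_ofPred_eq]
    rw [hk']
    exact ⟨by omega, h4⟩
  · intro k _
    rfl

lemma tendsto_evenAtTop {f : ℕ → ℝ} {l : Filter ℝ} (h : Tendsto (fun n => f (2 * n)) atTop l) :
    Tendsto f evenAtTop l := by
  have h2 : Tendsto (fun N : ℕ => N / 2) evenAtTop atTop :=
    (Nat.tendsto_div_const_atTop (by norm_num)).mono_left inf_le_left
  refine (h.comp h2).congr' ?_
  have : ∀ᶠ N in evenAtTop, Even N := by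
    unfold evenAtTop
    exact mem_inf_of_right (mem_principal_self _)
  filter_upwards [this] with N hN
  simp only [Function.comp]
  rw [Nat.two_mul_div_two_of_even hN]

lemma integral_pos' : 0 < ∫ x in Set.Ioi (0 : ℝ), Real.sqrt x * Real.exp (-2 * x ^ 2 / 3) := by
  have h := integral_rpow_mul_exp_neg_mul_rpow (p := 2) (q := 1 / 2) (b := 2 / 3)
    (by norm_num) (by norm_num) (by norm_num)
  have e : ∫ x in Set.Ioi (0 : ℝ), Real.sqrt x * Real.exp (-2 * x ^ 2 / 3) =
      ∫ x in Set.Ioi (0 : ℝ), x ^ (1 / 2 : ℝ) * Real.exp (-(2 / 3) * x ^ (2 : ℝ)) := by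
    congr 1
    ext x
    rw [Real.sqrt_eq_rpow, Real.rpow_two]
    congr 2
    ring
  rw [e, h]
  have := Real.Gamma_pos_of_pos (s := ((1 / 2 : ℝ) + 1) / 2) (by norm_num)
  positivity

/-- Critical limit law: at μ₁ = log 6, m(N)/√N converges in distribution to the law on
(0,∞) with density proportional to √x exp(-2x²/3). -/
theorem critical_limit_law (a b : ℝ) (ha : 0 ≤ a) (hab : a < b) :
    Filter.Tendsto
      (fun N : ℕ =>
        ∑ m ∈ (Finset.range (N + 1)).filter
            (fun m : ℕ => Even m ∧ 2 ≤ m ∧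
              a * Real.sqrt N ≤ (m : ℝ) ∧ (m : ℝ) ≤ b * Real.sqrt N),
          P (Real.log 6) N m)
      evenAtTop
      (nhds ((∫ x in a..b, Real.sqrt x * Real.exp (-2 * x ^ 2 / 3)) /
        (∫ x in Set.Ioi (0 : ℝ), Real.sqrt x * Real.exp (-2 * x ^ 2 / 3)))) := by
  apply tendsto_evenAtTop
  obtain ⟨c, hc, hg⟩ := gg_tendsto
  have hI : ∀ᵐ x : ℝ, ContinuousAt ((Set.Icc a b).indicator (fun _ => (1 : ℝ))) x := by
    have h1 : ∀ᵐ x : ℝ, x ≠ a := Measure.ae_ne volume a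
    have h2 : ∀ᵐ x : ℝ, x ≠ b := Measure.ae_ne volume b
    filter_upwards [h1, h2] with x hxa hxb
    apply ContinuousOn.continuousAt_indicator continuous_const.continuousOn
    rw [frontier_Icc hab.le]
    simp [hxa, hxb]
  have L1 := main_lim (Set.Icc a b) c hg hI
  have L2 := main_lim Set.univ c hg (by
    simp only [Set.indicator_univ]
    exact ae_of_all _ fun x => continuousAt_const)
  have e1 : ∫ x in Set.Ioi (0 : ℝ), (Set.Icc a b).indicator (fun _ => (1 : ℝ)) x *
      (√x * Real.exp (-2 * x ^ 2 / 3)) = ∫ x in a..b, Real.sqrt x * Real.exp (-2 * x ^ 2 / 3) := by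
    rw [intervalIntegral.integral_of_le hab.le]
    have : ∀ x : ℝ, (Set.Icc a b).indicator (fun _ => (1 : ℝ)) x *
      (√x * Real.exp (-2 * x ^ 2 / 3)) =
      (Set.Icc a b).indicator (fun x => √x * Real.exp (-2 * x ^ 2 / 3)) x := by
      intro x
      by_cases h : x ∈ Set.Icc a b <;> simp [h]
    simp only [this]
    rw [setIntegral_indicator measurableSet_Icc]
    apply setIntegral_congr_set
    have h1 : ∀ᵐ x : ℝ, x ≠ a := Measure.ae_ne volume a
    filter_upwards [h1] with x hx
    apply propext
    change (x ∈ Set.Ioi 0 ∩ Set.Icc a b) ↔ x ∈ Set.Ioc a b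
    simp only [Set.mem_inter_iff, Set.mem_Ioi, Set.mem_Icc, Set.mem_Ioc]
    constructor
    · rintro ⟨_, h2, h3⟩
      exact ⟨lt_of_le_of_ne h2 hx.symm, h3⟩
    · rintro ⟨h2, h3⟩
      exact ⟨by linarith, h2.le, h3⟩
  have hpos := integral_pos'
  simp only [Set.indicator_univ, one_mul] at L2
  rw [e1] at L1
  have hc2 : c / √2 ≠ 0 := by positivity
  have L3 := L1.div L2 (mul_ne_zero hc2 hpos.ne')
  rw [mul_div_mul_left _ _ hc2] at L3
  refine L3.congr' ?_
  filter_upwards [eventually_ge_atTop 1] with n hn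
  have hn' : (0 : ℝ) < n := by positivity
  have hs : 0 < √(2 * (n : ℝ)) := by positivity
  have hD : (√(2 * (n : ℝ)) / 2 * √√(2 * (n : ℝ))) ≠ 0 := by positivity
  have hA : (2 : ℝ) ^ (n + 2) * hh n 0 ≠ 0 := by
    unfold hh
    positivity
  simp only [Pi.div_apply]
  rw [div_div_div_cancel_right₀ hD]
  have hΘ : Θ (Real.log 6) (2 * n) = (2 : ℝ) ^ (n + 2) * hh n 0 *
      ∑ k ∈ Finset.range n, gg (k + 1) * rr n (k + 1) := by
    unfold Θ
    rw [sum_reindex n (fun _ => True) _ (by intro m; simp), Finset.mul_sum]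
    apply Finset.sum_congr rfl
    intro k hk
    rw [Finset.mem_range] at hk
    rw [if_pos trivial, w_eq n (k + 1) hn (by omega) (by omega)]
  unfold P
  rw [← Finset.sum_div, hΘ]
  symm
  rw [sum_reindex n (fun m : ℕ => a * Real.sqrt ((2 * n : ℕ) : ℝ) ≤ (m : ℝ) ∧
    (m : ℝ) ≤ b * Real.sqrt ((2 * n : ℕ) : ℝ)) _ (by intro m; simp only [Finset.mem_filter, Finset.mem_range])]
  symm
  rw [← mul_div_mul_left _ _ hA, Finset.mul_sum]
  congr 1
  apply Finset.sum_congr rfl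
  intro k hk
  rw [Finset.mem_range] at hk
  rw [w_eq n (k + 1) hn (by omega) (by omega)]
  have hmem : (2 * ((k + 1 : ℕ) : ℝ) / √(2 * (n : ℝ))) ∈ Set.Icc a b ↔
    (a * Real.sqrt ((2 * n : ℕ) : ℝ) ≤ ((2 * (k + 1) : ℕ) : ℝ) ∧
    ((2 * (k + 1) : ℕ) : ℝ) ≤ b * Real.sqrt ((2 * n : ℕ) : ℝ)) := by
    rw [Set.mem_Icc, le_div_iff₀ hs, div_le_iff₀ hs]
    push_cast
    rfl
  by_cases h : (2 * ((k + 1 : ℕ) : ℝ) / √(2 * (n : ℝ))) ∈ Set.Icc a b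
  · rw [Set.indicator_of_mem h, if_pos (hmem.mp h), one_mul]
  · rw [Set.indicator_of_notMem h, if_neg (fun h' => h (hmem.mpr h'))]
    ring
end

section
/- Unrooted critical ensemble limit law: at μ₁ = log 6 define the unrooted weights w̃(N,m) = (1/m)·exp(−μ₁ m/2)·C₀(N,m) for even m with 2 ≤ m ≤ N and the corresponding distribution P̃_N(m) = w̃(N,m)/Σ_{m' even, 2 ≤ m' ≤ N} w̃(N,m'). Then for all reals 0 ≤ a < b, P̃_N({m : a·√N ≤ m ≤ b·√N}) converges as N → ∞ along even integers to (∫_a^b x^{−1/2}·exp(−2x²/3) dx) / (∫_0^∞ x^{−1/2}·exp(−2x²/3) dx). -/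
open Filter Real MeasureTheory

open scoped Classical

/-- Unrooted weights at the critical point μ₁ = log 6: w̃(N,m) = (1/m) exp(-μ₁ m/2) C₀(N,m). -/
noncomputable def wTilde (N m : ℕ) : ℝ :=
  (1 / (m : ℝ)) * Real.exp (-Real.log 6 * m / 2) * C0 N m

/-- Unrooted critical boundary-length distribution. -/
noncomputable def PTilde (N m : ℕ) : ℝ :=
  wTilde N m / ∑ m' ∈ (Finset.range (N + 1)).filter (fun m' : ℕ => Even m' ∧ 2 ≤ m'),
    wTilde N m'

noncomputable def tA (k : ℕ) : ℝ :=
  (Nat.factorial (4 * k - 3) : ℝ) / ((Nat.factorial (2 * k - 2) : ℝ) ^ 2 * (2 * k) * 16 ^ k)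

noncomputable def tRho (n i : ℕ) : ℝ :=
  (3 * n + i) * (n - i + 1) * 4 / (3 * (2 * n + 2 * i + 1) * (2 * n + 2 * i + 2))

noncomputable def tR (n k : ℕ) : ℝ := ∏ i ∈ Finset.range k, tRho n i

noncomputable def tD (n : ℕ) : ℝ :=
  2 ^ (n + 2) * (Nat.factorial (3 * n - 1) : ℝ) /
    ((Nat.factorial (n + 1) : ℝ) * (Nat.factorial (2 * n) : ℝ))

lemma tD_pos (n : ℕ) : 0 < tD n := by unfold tD; positivity

lemma tR_eq (n k : ℕ) (hn : 1 ≤ n) (hk : k ≤ n) :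
    (Nat.factorial (3 * n + k - 1) : ℝ) /
      ((Nat.factorial (n - k + 1) : ℝ) * (Nat.factorial (2 * n + 2 * k) : ℝ)) * (4 / 3) ^ k
    = tR n k * ((Nat.factorial (3 * n - 1) : ℝ) /
      ((Nat.factorial (n + 1) : ℝ) * (Nat.factorial (2 * n) : ℝ))) := by
  induction k with
  | zero => simp [tR]
  | succ k ih =>
    have ih := ih (by omega)
    rw [tR, Finset.prod_range_succ, ← tR, mul_right_comm, ← ih, tRho]
    obtain ⟨d, rfl⟩ : ∃ d, n = d + k + 1 := ⟨n - k - 1, by omega⟩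
    have e1 : 3 * (d + k + 1) + (k + 1) - 1 = (3 * d + 4 * k + 2) + 1 := by omega
    have e2 : 3 * (d + k + 1) + k - 1 = (3 * d + 4 * k + 2) := by omega
    have e3 : d + k + 1 - (k + 1) + 1 = d + 1 := by omega
    have e4 : d + k + 1 - k + 1 = d + 1 + 1 := by omega
    have e5 : 2 * (d + k + 1) + 2 * (k + 1) = (2 * d + 4 * k + 2) + 1 + 1 := by omega
    have e6 : 2 * (d + k + 1) + 2 * k = (2 * d + 4 * k + 2) := by omega
    rw [e1, e2, e3, e4, e5, e6, Nat.factorial_succ (3 * d + 4 * k + 2), Nat.factorial_succ (d + 1),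
      Nat.factorial_succ (2 * d + 4 * k + 2 + 1), Nat.factorial_succ (2 * d + 4 * k + 2), pow_succ]
    have h1 : (Nat.factorial (d + 1) : ℝ) ≠ 0 := by positivity
    have h2 : (Nat.factorial (2 * d + 4 * k + 2) : ℝ) ≠ 0 := by positivity
    push_cast
    generalize (Nat.factorial (d + 1) : ℝ) = X at *
    generalize (Nat.factorial (2 * d + 4 * k + 2) : ℝ) = Y at *
    generalize (Nat.factorial (3 * d + 4 * k + 2) : ℝ) = Z at *
    generalize ((4:ℝ) / 3) ^ k = U at *
    have h3 : (2 * (d:ℝ) + 4 * k + 2 + 1 + 1) ≠ 0 := by positivity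
    have h4 : (2 * (d:ℝ) + 4 * k + 2 + 1) ≠ 0 := by positivity
    have h5 : (2 * ((d:ℝ) + k + 1) + 2 * k + 1) = (2 * (d:ℝ) + 4 * k + 2 + 1) := by ring
    have h6 : (2 * ((d:ℝ) + k + 1) + 2 * k + 2) = (2 * (d:ℝ) + 4 * k + 2 + 1 + 1) := by ring
    have h7 : ((d:ℝ) + k + 1 - k + 1) = d + 1 + 1 := by ring
    have h8 : (3 * ((d:ℝ) + k + 1) + k) = 3 * d + 4 * k + 2 + 1 := by ring
    rw [h5, h6, h7, h8]
    have h9 : (d:ℝ) + 1 + 1 ≠ 0 := by positivity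
    field_simp

lemma wTilde_eq (n k : ℕ) (h1 : 1 ≤ k) (hk : k ≤ n) :
    wTilde (2 * n) (2 * k) = tD n * (tA k * tR n k) := by
  have h := tR_eq n k (by omega) hk
  have : tD n * (tA k * tR n k) = 2 ^ (n + 2) * tA k * (tR n k * ((Nat.factorial (3 * n - 1) : ℝ) /
      ((Nat.factorial (n + 1) : ℝ) * (Nat.factorial (2 * n) : ℝ)))) := by
    unfold tD; ring
  rw [this, ← h, wTilde, C0, tA]
  have e0 : (2 * n - 2 * k) / 2 = n - k := by omega
  have e1 : 2 * (2 * k) + 3 * (n - k) - 1 = 3 * n + k - 1 := by omega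
  have e2 : 2 * (2 * k) - 3 = 4 * k - 3 := by omega
  have e3 : 2 * (2 * k) + 2 * (n - k) = 2 * n + 2 * k := by omega
  rw [e0, e1, e2, e3]
  have e4 : Real.exp (-Real.log 6 * ((2 * k : ℕ) : ℝ) / 2) = ((6:ℝ) ^ k)⁻¹ := by
    rw [← Real.exp_log (show (0:ℝ) < 6 by norm_num), ← Real.exp_nat_mul, ← Real.exp_neg,
      Real.exp_log (by norm_num)]
    congr 1; push_cast; ring
  rw [e4]
  have e5 : (2:ℝ) ^ (n + 2) = 2 ^ (n - k + 2) * 2 ^ k := by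
    rw [← pow_add]; congr 1; omega
  rw [e5]
  have e6 : ((16:ℝ)) ^ k = (4/3) ^ k * (2 ^ k * 6 ^ k) := by
    rw [← mul_pow, ← mul_pow]; norm_num
  rw [e6]
  push_cast
  have : (k:ℝ) ≠ 0 := by positivity
  field_simp

lemma tRho_nonneg (n i : ℕ) (h : i ≤ n) : 0 ≤ tRho n i := by
  have : (i:ℝ) ≤ n := by exact_mod_cast h
  unfold tRho
  have : (0:ℝ) ≤ n - i + 1 := by linarith
  positivity

lemma tRho_le (n i : ℕ) (hn : 1 ≤ n) (h : i ≤ n) :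
    tRho n i ≤ Real.exp (-(2 * i / (3 * n)) + 1 / n) := by
  have hi : (i:ℝ) ≤ n := by exact_mod_cast h
  have hn' : (0:ℝ) < n := by exact_mod_cast hn
  have hi0 : (0:ℝ) ≤ i := by positivity
  have s1 : tRho n i ≤ (i / (3 * n) + 1) * ((-(i:ℝ) + 1) / n + 1) := by
    have : (i / (3 * n) + 1) * ((-(i:ℝ) + 1) / n + 1) =
      (3 * n + i) * (n - i + 1) * 4 / (3 * (2 * n) * (2 * n)) := by
      field_simp; ring
    rw [this, tRho]
    have : (0:ℝ) ≤ n - i + 1 := by linarith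
    gcongr <;> linarith
  have s2 : (0:ℝ) ≤ (-(i:ℝ) + 1) / n + 1 := by
    have : (-(i:ℝ) + 1) / n + 1 = (n - i + 1) / n := by field_simp; ring
    rw [this]; apply div_nonneg <;> linarith
  calc tRho n i ≤ _ := s1
    _ ≤ Real.exp (i / (3 * n)) * Real.exp ((-(i:ℝ) + 1) / n) := by
      gcongr
      · exact Real.add_one_le_exp _
      · exact Real.add_one_le_exp _
    _ = _ := by
      rw [← Real.exp_add]; congr 1; field_simp; ring

lemma tR_nonneg (n k : ℕ) (hk : k ≤ n) : 0 ≤ tR n k :=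
  Finset.prod_nonneg fun i hi => tRho_nonneg n i (by have := Finset.mem_range.1 hi; omega)

lemma tR_le (n k : ℕ) (hn : 1 ≤ n) (hk : k ≤ n) :
    tR n k ≤ Real.exp (4 / 3) * Real.exp (-((k:ℝ) ^ 2 / (3 * n))) := by
  have hn' : (0:ℝ) < n := by exact_mod_cast hn
  have key : ∀ k ≤ n, tR n k ≤ Real.exp (-((k:ℝ) ^ 2 / (3 * n)) + (4 / 3) * k / n) := by
    intro k
    induction k with
    | zero => simp [tR]
    | succ k ih =>
      intro hk
      have := ih (by omega)
      rw [tR, Finset.prod_range_succ, ← tR]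
      calc _ ≤ Real.exp (-((k:ℝ) ^ 2 / (3 * n)) + (4 / 3) * k / n) *
            Real.exp (-(2 * k / (3 * n)) + 1 / n) := by
            gcongr
            · exact tRho_nonneg n k (by omega)
            · exact tRho_le n k hn (by omega)
        _ = _ := by
            rw [← Real.exp_add]; congr 1; push_cast; field_simp; ring
  refine (key k hk).trans ?_
  rw [← Real.exp_add, Real.exp_le_exp]
  have : (k:ℝ) ≤ n := by exact_mod_cast hk
  have : (4 / 3) * (k:ℝ) / n ≤ 4 / 3 := by rw [div_le_iff₀ hn']; linarith
  linarith

lemma log_bd (u : ℝ) (h : |u| ≤ 1 / 2) : |Real.log (1 + u) - u| ≤ 2 * u ^ 2 := by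
  have := Real.abs_log_sub_add_sum_range_le (x := -u) (by rw [abs_neg]; linarith) 1
  simp at this
  have h4 : u ^ 2 / (1 - |u|) ≤ 2 * u ^ 2 := by
    rw [div_le_iff₀ (by linarith)]; nlinarith [sq_nonneg u]
  have h5 : Real.log (1 + u) - u = -u + Real.log (1 + u) := by ring
  rw [h5]; linarith
lemma tRho_log (n i : ℕ) (hn : 1 ≤ n) (h : 2 * (i + 1) ≤ n) :
    0 < tRho n i ∧ |Real.log (tRho n i) + 8 / 3 * i / n| ≤ 1 / (2 * n) + 8 * (i + 1) ^ 2 / n ^ 2 := by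
  have hi : 2 * ((i:ℝ) + 1) ≤ n := by exact_mod_cast h
  have hn' : (0:ℝ) < n := by exact_mod_cast hn
  have hi0 : (0:ℝ) ≤ i := by positivity
  set v : ℝ := (i + 1) / n with hv
  have hv0 : 0 ≤ v := by positivity
  have hv2 : v ≤ 1 / 2 := by rw [hv, div_le_iff₀ hn']; linarith
  have L : ∀ u : ℝ, |u| ≤ v → 0 < 1 + u ∧ |Real.log (1 + u) - u| ≤ 2 * v ^ 2 := by
    intro u hu
    refine ⟨by have := (abs_le.1 hu).1; linarith, (log_bd u (hu.trans hv2)).trans ?_⟩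
    have : u ^ 2 ≤ v ^ 2 := by rw [← sq_abs u]; gcongr
    linarith
  obtain ⟨p1, l1⟩ := L (i / (3 * n)) (by
    rw [abs_of_nonneg (by positivity), hv, div_le_div_iff₀ (by positivity) hn']; nlinarith)
  obtain ⟨p2, l2⟩ := L ((1 - i) / n) (by
    rw [hv, abs_div, abs_of_pos hn']; gcongr; rw [abs_le]; constructor <;> linarith)
  obtain ⟨p3, l3⟩ := L ((2 * i + 1) / (2 * n)) (by
    rw [abs_of_nonneg (by positivity), hv, div_le_div_iff₀ (by positivity) hn']; nlinarith)
  obtain ⟨p4, l4⟩ := L ((i + 1) / n) (by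
    rw [abs_of_nonneg (by positivity)])
  have e : tRho n i = (1 + i / (3 * n)) * (1 + (1 - i) / n) /
      ((1 + (2 * i + 1) / (2 * n)) * (1 + (i + 1) / n)) := by
    unfold tRho; 
    have h5 : (2 * (n:ℝ) + 2 * i + 2) ≠ 0 := by positivity
    have h6 : (n:ℝ) + (i + 1) ≠ 0 := by positivity
    have h7 : (2 * (n:ℝ) + (2 * i + 1)) ≠ 0 := by positivity
    have h8 : (2 * (n:ℝ) + 2 * i + 1) ≠ 0 := by positivity
    field_simp
    ring
  refine ⟨by rw [e]; positivity, ?_⟩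
  rw [e, Real.log_div (by positivity) (by positivity), Real.log_mul p1.ne' p2.ne',
    Real.log_mul p3.ne' p4.ne']
  have e2 : 8 * ((i:ℝ) + 1) ^ 2 / n ^ 2 = 8 * v ^ 2 := by rw [hv]; field_simp
  rw [e2]
  have e3 : (i:ℝ) / (3 * n) + (1 - i) / n - (2 * i + 1) / (2 * n) - (i + 1) / n
    = - (8 / 3 * i / n) - 1 / (2 * n) := by field_simp; ring
  have q : (0:ℝ) < 1 / (2 * n) := by positivity
  rw [abs_le] at *
  constructor <;> linarith [l1.1, l1.2, l2.1, l2.2, l3.1, l3.2, l4.1, l4.2]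

lemma tR_log (n k : ℕ) (hn : 1 ≤ n) (h : 2 * k ≤ n) :
    0 < tR n k ∧ |Real.log (tR n k) + 4 / 3 * (k * (k - 1)) / n| ≤
      k / (2 * n) + 8 * k ^ 3 / n ^ 2 := by
  have hn' : (0:ℝ) < n := by exact_mod_cast hn
  induction k with
  | zero => simp [tR]
  | succ k ih =>
    obtain ⟨p, l⟩ := ih (by omega)
    obtain ⟨p', l'⟩ := tRho_log n k hn (by omega)
    rw [tR, Finset.prod_range_succ, ← tR]
    refine ⟨mul_pos p p', ?_⟩
    rw [Real.log_mul p.ne' p'.ne']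
    have e : Real.log (tR n k) + Real.log (tRho n k) + 4 / 3 * (((k + 1 : ℕ) : ℝ) * (((k + 1 : ℕ) : ℝ) - 1)) / n
      = (Real.log (tR n k) + 4 / 3 * (k * (k - 1)) / n) + (Real.log (tRho n k) + 8 / 3 * k / n) := by
      push_cast; ring
    rw [e]
    refine (abs_add_le _ _).trans ((add_le_add l l').trans ?_)
    have : (((k + 1 : ℕ) : ℝ)) / (2 * n) + 8 * ((k + 1 : ℕ) : ℝ) ^ 3 / n ^ 2 -
      (k / (2 * n) + 8 * (k:ℝ) ^ 3 / n ^ 2 + (1 / (2 * n) + 8 * ((k:ℝ) + 1) ^ 2 / n ^ 2)) =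
      8 * (2 * (k:ℝ)^2 + k) / n ^ 2 := by push_cast; field_simp; ring
    have : 0 ≤ 8 * (2 * (k:ℝ)^2 + k) / n ^ 2 := by positivity
    linarith

lemma tR_tendsto (K : ℕ → ℕ) (y : ℝ)
    (hK : Tendsto (fun n : ℕ => (K n : ℝ) / Real.sqrt n) atTop (nhds y)) :
    Tendsto (fun n => tR n (K n)) atTop (nhds (Real.exp (-(4 / 3) * y ^ 2))) := by
  have hs : Tendsto (fun n : ℕ => (Real.sqrt n)⁻¹) atTop (nhds 0) :=
    tendsto_inv_atTop_zero.comp (Real.tendsto_sqrt_atTop.comp tendsto_natCast_atTop_atTop)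
  have hKn : Tendsto (fun n : ℕ => (K n : ℝ) / Real.sqrt n * (Real.sqrt n)⁻¹) atTop (nhds 0) := by
    simpa using hK.mul hs
  have ev : ∀ᶠ n : ℕ in atTop, 1 ≤ n ∧ 2 * K n ≤ n := by
    filter_upwards [hKn.eventually (gt_mem_nhds (show (0:ℝ) < 1 / 2 by norm_num)),
      eventually_ge_atTop 1] with n h1 h2
    refine ⟨h2, ?_⟩
    have hn' : (0:ℝ) < n := by exact_mod_cast h2
    have : (K n : ℝ) / Real.sqrt n * (Real.sqrt n)⁻¹ = K n / n := by
      rw [← div_eq_mul_inv, div_div, Real.mul_self_sqrt hn'.le]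
    rw [this, div_lt_iff₀ hn'] at h1
    have : 2 * (K n : ℝ) ≤ n := by linarith
    exact_mod_cast this
  have main : Tendsto (fun n => Real.log (tR n (K n))) atTop (nhds (-(4 / 3) * y ^ 2)) := by
    have t1 : Tendsto (fun n : ℕ => (Real.log (tR n (K n)) + 4 / 3 * (K n * (K n - 1)) / n)) atTop (nhds 0) := by
      apply squeeze_zero_norm' (a := fun n : ℕ => (1 / 2) * ((K n : ℝ) / Real.sqrt n * (Real.sqrt n)⁻¹)
        + 8 * (((K n : ℝ) / Real.sqrt n) ^ 3 * (Real.sqrt n)⁻¹))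
      · filter_upwards [ev] with n hn
        have hn' : (0:ℝ) < n := by exact_mod_cast hn.1
        refine (tR_log n (K n) hn.1 hn.2).2.trans (le_of_eq ?_)
        have hsn : 0 < Real.sqrt n := Real.sqrt_pos.2 hn'
        have h2 : (n:ℝ) = Real.sqrt n ^ 2 := (Real.sq_sqrt hn'.le).symm
        generalize Real.sqrt n = s at *
        rw [h2]; field_simp
      · have := (hKn.const_mul (1/2)).add (((hK.pow 3).mul hs).const_mul 8)
        simpa only [mul_zero, add_zero] using this
    have t2 : Tendsto (fun n : ℕ => 4 / 3 * (((K n : ℝ) / Real.sqrt n) ^ 2 - ((K n : ℝ) / Real.sqrt n * (Real.sqrt n)⁻¹)))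
      atTop (nhds (4 / 3 * (y ^ 2 - 0))) := ((hK.pow 2).sub hKn).const_mul _
    have := t1.sub t2
    refine (this.congr' ?_).trans (by simp)
    filter_upwards [ev] with n hn
    have hn' : (0:ℝ) < n := by exact_mod_cast hn.1
    have hsn : 0 < Real.sqrt n := Real.sqrt_pos.2 hn'
    have h2 : (n:ℝ) = Real.sqrt n ^ 2 := (Real.sq_sqrt hn'.le).symm
    have : 4 / 3 * (K n * ((K n : ℝ) - 1)) / n = 4 / 3 * (((K n : ℝ) / Real.sqrt n) ^ 2 - ((K n : ℝ) / Real.sqrt n * (Real.sqrt n)⁻¹)) := by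
      generalize Real.sqrt n = s at *
      rw [h2]; field_simp
    rw [this]; ring
  refine ((Real.continuous_exp.tendsto _).comp main).congr' ?_
  filter_upwards [ev] with n hn
  exact Real.exp_log (tR_log n (K n) hn.1 hn.2).1

lemma tA_nonneg (k : ℕ) : 0 ≤ tA k := by unfold tA; positivity

lemma tA_eq (k : ℕ) (hk : 1 ≤ k) :
    Real.sqrt k * tA k = (1 / 32) * Real.sqrt ((4 - 3 * (k:ℝ)⁻¹) / Real.Wallis.W (2 * k - 2)) := by
  have hk' : (1:ℝ) ≤ k := by exact_mod_cast hk
  have hA := tA_nonneg k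
  have hW := Real.Wallis.W_pos (2 * k - 2)
  have h0 : (0:ℝ) ≤ 4 - 3 * (k:ℝ)⁻¹ := by
    have : (k:ℝ)⁻¹ ≤ 1 := inv_le_one_of_one_le₀ hk'
    linarith
  rw [← pow_left_inj₀ (by positivity) (by positivity) (two_ne_zero), mul_pow, mul_pow,
    Real.sq_sqrt (by positivity), Real.sq_sqrt (by positivity), Real.Wallis.W_eq_factorial_ratio, tA]
  obtain ⟨d, rfl⟩ : ∃ d, k = d + 1 := ⟨k - 1, by omega⟩
  have e1 : 4 * (d + 1) - 3 = 4 * d + 1 := by omega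
  have e2 : 2 * (d + 1) - 2 = 2 * d := by omega
  have e3 : 2 * (2 * d) = 4 * d := by omega
  have e4 : (2:ℝ) ^ (4 * (2 * d)) = (16 ^ d) ^ 2 := by
    rw [← pow_mul, show (16:ℝ) = 2 ^ 4 by norm_num, ← pow_mul]; congr 1; ring
  rw [e1, e2, e3, e4, Nat.factorial_succ, pow_succ]
  push_cast
  have h1 : (Nat.factorial (4 * d) : ℝ) ≠ 0 := by positivity
  have h2 : (Nat.factorial (2 * d) : ℝ) ≠ 0 := by positivity
  have h3 : ((16:ℝ) ^ d) ≠ 0 := by positivity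
  have h4 : (d:ℝ) + 1 ≠ 0 := by positivity
  have h5 : 2 * (2 * (d:ℝ)) + 1 ≠ 0 := by positivity
  field_simp
  ring

lemma tA_tendsto : ∃ c : ℝ, 0 < c ∧ Tendsto (fun k : ℕ => Real.sqrt k * tA k) atTop (nhds c) := by
  refine ⟨(1 / 32) * Real.sqrt ((4 - 3 * 0) / (Real.pi / 2)), by positivity, ?_⟩
  have hW : Tendsto (fun k : ℕ => Real.Wallis.W (2 * k - 2)) atTop (nhds (Real.pi / 2)) :=
    Real.Wallis.tendsto_W_nhds_pi_div_two.comp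
      (tendsto_atTop_mono (fun k => by omega : ∀ k : ℕ, k - 2 ≤ 2 * k - 2) (tendsto_sub_atTop_nat 2))
  have hi : Tendsto (fun k : ℕ => ((k:ℝ))⁻¹) atTop (nhds 0) := tendsto_inv_atTop_nhds_zero_nat
  have := ((((tendsto_const_nhds (x := (4:ℝ))).sub (hi.const_mul 3)).div hW (by positivity)).sqrt).const_mul (1/32)
  refine this.congr' ?_
  filter_upwards [eventually_ge_atTop 1] with k hk
  exact (tA_eq k hk).symm
lemma sum_int (t : ℝ) (ht : 0 < t) (n : ℕ) (F : ℕ → ℝ) :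
    ∫ x in Set.Ioi (0:ℝ), (if ⌈x * t⌉₊ ≤ n then F ⌈x * t⌉₊ else 0) =
      t⁻¹ * ∑ k ∈ Finset.Icc 1 n, F k := by
  have h1 : ∀ x ∈ Set.Ioi (0:ℝ), (if ⌈x * t⌉₊ ≤ n then F ⌈x * t⌉₊ else 0) =
      ∑ k ∈ Finset.Icc 1 n, (Set.Ioc (((k:ℝ) - 1) / t) (k / t)).indicator (fun _ => F k) x := by
    intro x hx
    have hx : 0 < x := hx
    have hk0 : 0 < ⌈x * t⌉₊ := Nat.ceil_pos.2 (by positivity)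
    have hmem : ∀ k : ℕ, 1 ≤ k → (x ∈ Set.Ioc (((k:ℝ) - 1) / t) (k / t) ↔ k = ⌈x * t⌉₊) := by
      intro k hk
      rw [Set.mem_Ioc, div_lt_iff₀ ht, le_div_iff₀ ht, eq_comm, Nat.ceil_eq_iff (by omega),
        Nat.cast_sub hk, Nat.cast_one]
    have h2 : ∀ k ∈ Finset.Icc 1 n,
        (Set.Ioc (((k:ℝ) - 1) / t) (k / t)).indicator (fun _ => F k) x =
        if k = ⌈x * t⌉₊ then F k else 0 := by
      intro k hk
      rw [Set.indicator_apply]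
      exact if_congr (hmem k (Finset.mem_Icc.1 hk).1) rfl rfl
    rw [Finset.sum_congr rfl h2, Finset.sum_ite_eq']
    refine if_congr ?_ rfl rfl
    rw [Finset.mem_Icc]
    exact ⟨fun h => ⟨hk0, h⟩, fun h => h.2⟩
  rw [setIntegral_congr_fun measurableSet_Ioi h1, integral_finsetSum, Finset.mul_sum]
  · refine Finset.sum_congr rfl fun k hk => ?_
    have hk1 : (1:ℝ) ≤ k := by exact_mod_cast (Finset.mem_Icc.1 hk).1
    rw [setIntegral_indicator measurableSet_Ioc, Set.inter_eq_right.2, setIntegral_const]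
    · simp only [Measure.real, Real.volume_Ioc]
      have : (k:ℝ) / t - (k - 1) / t = t⁻¹ := by field_simp; ring
      rw [this, ENNReal.toReal_ofReal (by positivity), smul_eq_mul]
    · intro x hx
      exact lt_of_le_of_lt (div_nonneg (by linarith) ht.le) hx.1
  · intro k _
    refine Integrable.integrableOn ?_
    rw [integrable_indicator_iff measurableSet_Ioc]
    exact integrableOn_const (by simp)

lemma main_lim_s18 (φ : ℝ → ℝ) (hb : ∀ x, |φ x| ≤ 1)
    (hc : ∀ᵐ x ∂(volume.restrict (Set.Ioi (0:ℝ))), ContinuousAt φ x) (c : ℝ)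
    (hA : Tendsto (fun k : ℕ => Real.sqrt k * tA k) atTop (nhds c)) :
    Tendsto (fun n : ℕ => (Real.sqrt (2 * n) / 2)⁻¹ * ∑ k ∈ Finset.Icc 1 n,
      (φ (k / (Real.sqrt (2 * n) / 2)) * Real.sqrt (Real.sqrt (2 * n) / 2) * (tA k * tR n k))) atTop
      (nhds (∫ x in Set.Ioi (0:ℝ), c * (φ x * (x ^ (-(1 : ℝ) / 2) * Real.exp (-2 * x ^ 2 / 3))))) := by
  obtain ⟨M, hM⟩ : ∃ M, ∀ k : ℕ, Real.sqrt k * tA k ≤ M := by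
    obtain ⟨M, hM⟩ := hA.bddAbove_range
    exact ⟨M, fun k => hM ⟨k, rfl⟩⟩
  have hM0 : 0 ≤ M := (mul_nonneg (Real.sqrt_nonneg _) (tA_nonneg 0)).trans (hM 0)
  let F : ℕ → ℝ → ℝ := fun n x =>
    if ⌈x * (Real.sqrt (2 * n) / 2)⌉₊ ≤ n then
      (fun k : ℕ => φ (k / (Real.sqrt (2 * n) / 2)) * Real.sqrt (Real.sqrt (2 * n) / 2) * (tA k * tR n k))
        ⌈x * (Real.sqrt (2 * n) / 2)⌉₊ else 0
  have htlim : Tendsto (fun n : ℕ => Real.sqrt (2 * n) / 2) atTop atTop := by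
    refine Tendsto.atTop_div_const (by norm_num) (Real.tendsto_sqrt_atTop.comp ?_)
    exact Tendsto.const_mul_atTop (by norm_num) tendsto_natCast_atTop_atTop
  have hdom : Tendsto (fun n : ℕ => ∫ x in Set.Ioi (0:ℝ), F n x) atTop
      (nhds (∫ x in Set.Ioi (0:ℝ), c * (φ x * (x ^ (-(1 : ℝ) / 2) * Real.exp (-2 * x ^ 2 / 3))))) := by
    apply tendsto_integral_of_dominated_convergence
      (fun x => (M * Real.exp (4 / 3)) * (x ^ (-(1 : ℝ) / 2) * Real.exp (-(1 / 6) * x ^ 2)))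
    · intro n
      let G : ℕ → ℝ := fun j => if j ≤ n then
        (fun k : ℕ => φ (k / (Real.sqrt (2 * n) / 2)) * Real.sqrt (Real.sqrt (2 * n) / 2) * (tA k * tR n k)) j else 0
      have hG : Measurable G := measurable_from_nat
      have : F n = fun x => G ⌈x * (Real.sqrt (2 * n) / 2)⌉₊ := rfl
      rw [this]
      exact (hG.comp (Nat.measurable_ceil.comp (measurable_id.mul_const _))).aestronglyMeasurable
    · exact (integrableOn_rpow_mul_exp_neg_mul_sq (by norm_num) (by norm_num)).const_mul _
    · intro n
      filter_upwards [ae_restrict_mem measurableSet_Ioi] with x hx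
      have hx : 0 < x := hx
      simp only [F]
      split_ifs with hk
      swap
      · rw [norm_zero]; positivity
      rcases Nat.eq_zero_or_pos n with rfl | hn
      · simp; positivity
      have hn' : (0:ℝ) < n := by exact_mod_cast hn
      set t := Real.sqrt (2 * n) / 2 with htdef
      have ht : 0 < t := by positivity
      have ht2 : t ^ 2 = n / 2 := by
        rw [htdef, div_pow, Real.sq_sqrt (by positivity)]; ring
      set k := ⌈x * t⌉₊ with hkdef
      have hxk : x * t ≤ k := Nat.le_ceil _
      have hxt : 0 < x * t := by positivity
      have hR := tR_le n k hn hk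
      have hR0 := tR_nonneg n k hk
      have hA0 := tA_nonneg k
      rw [Real.norm_eq_abs, abs_mul, abs_mul, abs_of_nonneg (Real.sqrt_nonneg t),
        abs_of_nonneg (mul_nonneg hA0 hR0)]
      have s1 : Real.sqrt t * tA k ≤ M * x ^ (-(1 : ℝ) / 2) := by
        have e : x ^ (-(1 : ℝ) / 2) = (Real.sqrt x)⁻¹ := by
          rw [neg_div, Real.rpow_neg hx.le, Real.sqrt_eq_rpow]
        rw [e, ← div_eq_mul_inv, le_div_iff₀ (Real.sqrt_pos.2 hx)]
        calc Real.sqrt t * tA k * Real.sqrt x = Real.sqrt (x * t) * tA k := by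
              rw [Real.sqrt_mul hx.le]; ring
          _ ≤ Real.sqrt k * tA k := by gcongr
          _ ≤ M := hM k
      have s2 : tR n k ≤ Real.exp (4 / 3) * Real.exp (-(1 / 6) * x ^ 2) := by
        refine hR.trans ?_
        gcongr
        have : (x * t) ^ 2 ≤ (k:ℝ) ^ 2 := by gcongr
        rw [mul_pow, ht2] at this
        have : x ^ 2 / 6 ≤ (k:ℝ) ^ 2 / (3 * n) := by
          rw [div_le_div_iff₀ (by norm_num) (by positivity)]; nlinarith
        linarith
      calc |φ (k / t)| * Real.sqrt t * (tA k * tR n k)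
          ≤ 1 * Real.sqrt t * (tA k * tR n k) := by gcongr; exact hb _
        _ = (Real.sqrt t * tA k) * tR n k := by ring
        _ ≤ (M * x ^ (-(1 : ℝ) / 2)) * (Real.exp (4 / 3) * Real.exp (-(1 / 6) * x ^ 2)) := by gcongr
        _ = _ := by ring
    · filter_upwards [ae_restrict_mem measurableSet_Ioi, hc] with x hx hcx
      have hx : 0 < x := hx
      let K : ℕ → ℕ := fun n => ⌈x * (Real.sqrt (2 * n) / 2)⌉₊
      have hKt : Tendsto (fun n : ℕ => (K n : ℝ) / (Real.sqrt (2 * n) / 2)) atTop (nhds x) :=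
        (tendsto_nat_ceil_mul_div_atTop hx.le).comp htlim
      have hKinf : Tendsto K atTop atTop :=
        tendsto_nat_ceil_atTop.comp (htlim.const_mul_atTop hx)
      have hKs : Tendsto (fun n : ℕ => (K n : ℝ) / Real.sqrt n) atTop (nhds (x * (Real.sqrt 2 / 2))) := by
        refine (hKt.mul_const (Real.sqrt 2 / 2)).congr' ?_
        filter_upwards [eventually_ge_atTop 1] with n hn
        have hn' : (0:ℝ) < n := by exact_mod_cast hn
        rw [Real.sqrt_mul (by norm_num)]
        have : 0 < Real.sqrt n := Real.sqrt_pos.2 hn'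
        field_simp
      have hKn : ∀ᶠ n : ℕ in atTop, K n ≤ n := by
        have hs : Tendsto (fun n : ℕ => (Real.sqrt n)⁻¹) atTop (nhds 0) :=
          tendsto_inv_atTop_zero.comp (Real.tendsto_sqrt_atTop.comp tendsto_natCast_atTop_atTop)
        have := hKs.mul hs
        rw [mul_zero] at this
        filter_upwards [this.eventually (gt_mem_nhds (show (0:ℝ) < 1 by norm_num)),
          eventually_ge_atTop 1] with n h1 h2
        have hn' : (0:ℝ) < n := by exact_mod_cast h2
        rw [← div_eq_mul_inv, div_div, Real.mul_self_sqrt hn'.le, div_lt_one hn'] at h1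
        exact_mod_cast h1.le
      have l1 := hcx.tendsto.comp hKt
      have l2 := hA.comp hKinf
      have l3 := tR_tendsto K _ hKs
      have l4 : Tendsto (fun n : ℕ => (Real.sqrt ((K n : ℝ) / (Real.sqrt (2 * n) / 2)))⁻¹) atTop
        (nhds (Real.sqrt x)⁻¹) := hKt.sqrt.inv₀ (Real.sqrt_pos.2 hx).ne'
      have l := (l1.mul (l4.mul l2)).mul l3
      have e : φ x * ((Real.sqrt x)⁻¹ * c) * Real.exp (-(4 / 3) * (x * (Real.sqrt 2 / 2)) ^ 2) =
          c * (φ x * (x ^ (-(1 : ℝ) / 2) * Real.exp (-2 * x ^ 2 / 3))) := by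
        have e1 : x ^ (-(1 : ℝ) / 2) = (Real.sqrt x)⁻¹ := by
          rw [neg_div, Real.rpow_neg hx.le, Real.sqrt_eq_rpow]
        have e2 : -(4 / 3) * (x * (Real.sqrt 2 / 2)) ^ 2 = -2 * x ^ 2 / 3 := by
          rw [mul_pow, div_pow, Real.sq_sqrt (by norm_num)]; ring
        rw [e1, e2]; ring
      rw [e] at l
      refine l.congr' ?_
      filter_upwards [hKn, eventually_ge_atTop 1] with n h1 h2
      have hn' : (0:ℝ) < n := by exact_mod_cast h2
      simp only [F, Function.comp]
      rw [if_pos h1]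
      change φ (↑(K n) / (√(2 * ↑n) / 2)) * _ * _ = φ (↑(K n) / (√(2 * ↑n) / 2)) * _ * (tA (K n) * tR n (K n))
      have hKpos : (0:ℝ) < K n := by
        have : 0 < K n := Nat.ceil_pos.2 (by positivity)
        exact_mod_cast this
      have ht : (0:ℝ) < √(2 * ↑n) / 2 := by positivity
      rw [Real.sqrt_div hKpos.le]
      have h3 : √(K n : ℝ) ≠ 0 := (Real.sqrt_pos.2 hKpos).ne'
      have h4 : √(√(2 * (n:ℝ)) / 2) ≠ 0 := (Real.sqrt_pos.2 ht).ne'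
      rw [inv_div]
      generalize √(√(2 * (n:ℝ)) / 2) = T at *
      field_simp
  refine hdom.congr' ?_
  filter_upwards [eventually_ge_atTop 1] with n hn
  have hn' : (0:ℝ) < n := by exact_mod_cast hn
  have ht : (0:ℝ) < √(2 * (n:ℝ)) / 2 := by positivity
  exact sum_int _ ht n (fun k : ℕ => φ (k / (√(2 * (n:ℝ)) / 2)) * √(√(2 * (n:ℝ)) / 2) * (tA k * tR n k))

/-- Unrooted critical ensemble limit law: m(N)/√N converges in distribution to the law on
(0,∞) with density proportional to x^(-1/2) exp(-2x²/3). -/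
theorem unrooted_critical_limit_law (a b : ℝ) (ha : 0 ≤ a) (hab : a < b) :
    Filter.Tendsto
      (fun N : ℕ =>
        ∑ m ∈ (Finset.range (N + 1)).filter
            (fun m : ℕ => Even m ∧ 2 ≤ m ∧
              a * Real.sqrt N ≤ (m : ℝ) ∧ (m : ℝ) ≤ b * Real.sqrt N),
          PTilde N m)
      evenAtTop
      (nhds ((∫ x in a..b, x ^ (-(1 : ℝ) / 2) * Real.exp (-2 * x ^ 2 / 3)) /
        (∫ x in Set.Ioi (0 : ℝ), x ^ (-(1 : ℝ) / 2) * Real.exp (-2 * x ^ 2 / 3)))) := by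
  obtain ⟨c, hc, hA⟩ := tA_tendsto
  let h : ℝ → ℝ := fun x => x ^ (-(1 : ℝ) / 2) * Real.exp (-2 * x ^ 2 / 3)
  let φ : ℝ → ℝ := (Set.Icc a b).indicator 1
  have hint : IntegrableOn h (Set.Ioi 0) := by
    have := integrableOn_rpow_mul_exp_neg_mul_sq (b := 2 / 3) (by norm_num) (s := -(1:ℝ) / 2) (by norm_num)
    refine this.congr_fun (fun x _ => ?_) measurableSet_Ioi
    simp only [h]; congr 2; ring
  have hpos : 0 < ∫ x in Set.Ioi (0:ℝ), h x := by
    rw [setIntegral_pos_iff_support_of_nonneg_ae]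
    · have : Function.support h ∩ Set.Ioi 0 = Set.Ioi 0 := by
        refine Set.inter_eq_right.2 fun x hx => ?_
        have hx : 0 < x := hx
        have : 0 < h x := by simp only [h]; positivity
        exact this.ne'
      rw [this]; simp
    · filter_upwards [ae_restrict_mem measurableSet_Ioi] with x hx
      have hx : 0 < x := hx
      simp only [h, Pi.zero_apply]; positivity
    · exact hint
  have L1 := main_lim_s18 1 (by simp) (ae_of_all _ fun x => continuousAt_const) c hA
  have L2 := main_lim_s18 φ (by
      intro x; simp only [φ, Set.indicator_apply]; split_ifs <;> simp) (by
      refine ae_restrict_of_ae ?_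
      have : ∀ᵐ x ∂(volume : Measure ℝ), x ∉ ({a, b} : Set ℝ) :=
        (Set.toFinite _).measure_zero volume |> measure_eq_zero_iff_ae_notMem.1
      filter_upwards [this] with x hx
      refine ContinuousAt.congr_of_eventuallyEq (f := fun _ => φ x) continuousAt_const ?_
      simp only [Set.mem_insert_iff, Set.mem_singleton_iff, not_or] at hx
      have ha' : ∀ᶠ y in nhds x, (a ≤ y ↔ a ≤ x) := by
        rcases lt_or_gt_of_ne hx.1 with h | h
        · filter_upwards [gt_mem_nhds h] with y hy
          exact ⟨fun h' => absurd hy (not_lt.2 h'), fun h' => absurd h (not_lt.2 h')⟩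
        · filter_upwards [lt_mem_nhds h] with y hy
          exact ⟨fun _ => h.le, fun _ => hy.le⟩
      have hb' : ∀ᶠ y in nhds x, (y ≤ b ↔ x ≤ b) := by
        rcases lt_or_gt_of_ne hx.2 with h | h
        · filter_upwards [gt_mem_nhds h] with y hy
          exact ⟨fun _ => h.le, fun _ => hy.le⟩
        · filter_upwards [lt_mem_nhds h] with y hy
          exact ⟨fun h' => absurd hy (not_lt.2 h'), fun h' => absurd h (not_lt.2 h')⟩
      filter_upwards [ha', hb'] with y h1 h2
      simp only [φ, Set.indicator_apply, Set.mem_Icc, h1, h2]; rfl) c hA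
  have I1 : ∫ x in Set.Ioi (0:ℝ), c * ((1 : ℝ → ℝ) x * (x ^ (-(1 : ℝ) / 2) * Real.exp (-2 * x ^ 2 / 3)))
      = c * ∫ x in Set.Ioi (0:ℝ), h x := by
    rw [integral_const_mul]; simp [h]
  have I2 : ∫ x in Set.Ioi (0:ℝ), c * (φ x * (x ^ (-(1 : ℝ) / 2) * Real.exp (-2 * x ^ 2 / 3)))
      = c * ∫ x in a..b, h x := by
    rw [integral_const_mul, intervalIntegral.integral_of_le hab.le]
    congr 1
    have : ∀ x, φ x * (x ^ (-(1 : ℝ) / 2) * Real.exp (-2 * x ^ 2 / 3)) = (Set.Icc a b).indicator h x := by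
      intro x; simp only [φ, Set.indicator_apply, h]; split_ifs <;> simp
    simp only [this]
    rw [setIntegral_indicator measurableSet_Icc]
    refine setIntegral_congr_set ?_
    have e1 : (Set.Ioi (0:ℝ) : Set ℝ) =ᵐ[volume] Set.Ici 0 := Ioi_ae_eq_Ici
    have e2 := e1.inter (ae_eq_refl (Set.Icc a b))
    refine e2.trans ?_
    have e3 : Set.Ici (0:ℝ) ∩ Set.Icc a b = Set.Icc a b :=
      Set.inter_eq_right.2 (fun x (hx : x ∈ Set.Icc a b) => ha.trans hx.1)
    rw [e3]
    exact Ioc_ae_eq_Icc.symm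
  rw [I1] at L1
  rw [I2] at L2
  have Q := L2.div L1 (mul_pos hc hpos).ne'
  rw [mul_div_mul_left _ _ hc.ne'] at Q
  -- reduction to even `N`
  have red : ∀ (f : ℕ → ℝ) (l : Filter ℝ), Tendsto (fun n => f (2 * n)) atTop l →
      Tendsto f evenAtTop l := by
    intro f l hf s hs
    have := hf hs
    rw [mem_map, mem_atTop_sets] at this
    obtain ⟨n0, hn0⟩ := this
    rw [mem_map, evenAtTop, mem_inf_principal]
    filter_upwards [eventually_ge_atTop (2 * n0)] with N hN hev
    obtain ⟨n, hn⟩ := hev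
    have e : N = 2 * n := by omega
    rw [e]
    exact hn0 n (by omega)
  apply red
  refine Q.congr' ?_
  filter_upwards [eventually_ge_atTop 1] with n hn
  have hn' : (0:ℝ) < n := by exact_mod_cast hn
  set t := √(2 * (n:ℝ)) / 2 with htdef
  have ht : 0 < t := by positivity
  have hst : 0 < √t := Real.sqrt_pos.2 ht
  have hden : ∑ m' ∈ (Finset.range (2 * n + 1)).filter (fun m' : ℕ => Even m' ∧ 2 ≤ m'), wTilde (2 * n) m'
      = tD n * ∑ k ∈ Finset.Icc 1 n, tA k * tR n k := by
    rw [Finset.mul_sum]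
    symm
    refine Finset.sum_bij (fun k _ => 2 * k) ?_ ?_ ?_ ?_
    · intro k hk
      simp only [Finset.mem_Icc, Finset.mem_filter, Finset.mem_range] at *
      exact ⟨by omega, ⟨k, by omega⟩, by omega⟩
    · intro k _ k' _ h; omega
    · intro m hm
      simp only [Finset.mem_filter, Finset.mem_range] at hm
      obtain ⟨h1, ⟨k, hk⟩, h2⟩ := hm
      exact ⟨k, by simp only [Finset.mem_Icc]; omega, by omega⟩
    · intro k hk
      simp only [Finset.mem_Icc] at hk
      exact (wTilde_eq n k hk.1 hk.2).symm
  have hnum : ∑ m ∈ (Finset.range (2 * n + 1)).filter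
            (fun m : ℕ => Even m ∧ 2 ≤ m ∧
              a * Real.sqrt ((2 * n : ℕ) : ℝ) ≤ (m : ℝ) ∧ (m : ℝ) ≤ b * Real.sqrt ((2 * n : ℕ) : ℝ)), wTilde (2 * n) m
      = tD n * ∑ k ∈ Finset.Icc 1 n, φ (k / t) * (tA k * tR n k) := by
    have hφ : ∀ k : ℕ, φ (k / t) * (tA k * tR n k) =
        if a * t ≤ k ∧ k ≤ b * t then tA k * tR n k else 0 := by
      intro k
      simp only [φ, Set.indicator_apply, Set.mem_Icc, le_div_iff₀ ht, div_le_iff₀ ht]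
      split_ifs <;> simp
    simp only [hφ]
    rw [← Finset.sum_filter, Finset.mul_sum]
    symm
    have hs2 : √(((2 * n : ℕ) : ℝ)) = 2 * t := by rw [htdef]; push_cast; ring
    rw [hs2]
    refine Finset.sum_bij (fun k _ => 2 * k) ?_ ?_ ?_ ?_
    · intro k hk
      simp only [Finset.mem_Icc, Finset.mem_filter, Finset.mem_range] at *
      refine ⟨by omega, ⟨k, by omega⟩, by omega, ?_, ?_⟩ <;> push_cast <;> linarith [hk.2.1, hk.2.2]
    · intro k _ k' _ h; omega
    · intro m hm
      simp only [Finset.mem_filter, Finset.mem_range] at hm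
      obtain ⟨h1, ⟨k, hk⟩, h2, h3, h4⟩ := hm
      have : (m:ℝ) = k + k := by exact_mod_cast hk
      refine ⟨k, ?_, by omega⟩
      simp only [Finset.mem_filter, Finset.mem_Icc]
      exact ⟨by omega, by linarith, by linarith⟩
    · intro k hk
      simp only [Finset.mem_filter, Finset.mem_Icc] at hk
      exact (wTilde_eq n k hk.1.1 hk.1.2).symm
  simp only [PTilde]
  rw [← Finset.sum_div, hden, hnum, mul_div_mul_left _ _ (tD_pos n).ne']
  simp only [Pi.div_apply]
  rw [mul_div_mul_left _ _ (inv_pos.2 ht).ne']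
  have f1 : ∀ ψ : ℝ → ℝ, ∑ k ∈ Finset.Icc 1 n, ψ (k / t) * √t * (tA k * tR n k) =
      √t * ∑ k ∈ Finset.Icc 1 n, ψ (k / t) * (tA k * tR n k) := by
    intro ψ; rw [Finset.mul_sum]; exact Finset.sum_congr rfl fun k _ => by ring
  rw [f1, f1, mul_div_mul_left _ _ hst.ne']
  simp
end

section
/- Critical ratio scaling: let μ₁ = log 6 and fix β > 0. If (m_N) is a sequence of even integers with m_N/√N → β as N → ∞ along even integers, then √N · ( C₀(N, m_N + 2)/(6·C₀(N, m_N)) − 1 ) → 1/β − (8/3)·β as N → ∞; i.e. at criticality the one-step probability ratio equals 1 + (1/m − (8/3)·m/N)·(1 + o(1)) for m of order √N. -/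
open Filter Real MeasureTheory

lemma C0_ratio (k i : ℕ) :
    C0 (k + 2 + 2 * i + 2) (k + 2 + 2) / C0 (k + 2 + 2 * i + 2) (k + 2) =
      2 * (2 * k + 3 * i + 7) * (i + 2) * ((2 * k + 5) * (2 * k + 3)) /
        ((2 * k + 2 * i + 7) * (2 * k + 2 * i + 8) * ((k + 2) * (k + 1))) := by
  have h1 : (k + 2 + 2 * i + 2 - (k + 2 + 2)) / 2 = i := by omega
  have h2 : (k + 2 + 2 * i + 2 - (k + 2)) / 2 = i + 1 := by omega
  unfold C0
  rw [h1, h2]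
  have e1 : 2 * (k + 2 + 2) + 3 * i - 1 = (2 * k + 3 * i + 6) + 1 := by omega
  have e2 : 2 * (k + 2 + 2) - 3 = (2 * k + 1) + 1 + 1 + 1 + 1 := by omega
  have e3 : 2 * (k + 2 + 2) + 2 * i = (2 * k + 2 * i + 6) + 1 + 1 := by omega
  have e4 : k + 2 + 2 - 2 = k + 1 + 1 := by omega
  have e5 : 2 * (k + 2) + 3 * (i + 1) - 1 = 2 * k + 3 * i + 6 := by omega
  have e6 : 2 * (k + 2) - 3 = 2 * k + 1 := by omega
  have e7 : 2 * (k + 2) + 2 * (i + 1) = 2 * k + 2 * i + 6 := by omega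
  have e8 : k + 2 - 2 = k := by omega
  rw [e1, e2, e3, e4, e5, e6, e7, e8]
  have f1 := Nat.cast_ne_zero (R := ℝ).2 (Nat.factorial_ne_zero (2 * k + 3 * i + 6))
  have f2 := Nat.cast_ne_zero (R := ℝ).2 (Nat.factorial_ne_zero (2 * k + 1))
  have f3 := Nat.cast_ne_zero (R := ℝ).2 (Nat.factorial_ne_zero (2 * k + 2 * i + 6))
  have f4 := Nat.cast_ne_zero (R := ℝ).2 (Nat.factorial_ne_zero k)
  have f5 := Nat.cast_ne_zero (R := ℝ).2 (Nat.factorial_ne_zero (i + 1))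
  rw [Nat.factorial_succ (2 * k + 3 * i + 6), Nat.factorial_succ (2 * k + 1 + 1 + 1 + 1),
    Nat.factorial_succ (2 * k + 1 + 1 + 1), Nat.factorial_succ (2 * k + 1 + 1),
    Nat.factorial_succ (2 * k + 1), Nat.factorial_succ (2 * k + 2 * i + 6 + 1),
    Nat.factorial_succ (2 * k + 2 * i + 6), Nat.factorial_succ (k + 1), Nat.factorial_succ k,
    Nat.factorial_succ (i + 1)]
  generalize Nat.factorial (2 * k + 3 * i + 6) = F1 at *
  generalize Nat.factorial (2 * k + 1) = F2 at *
  generalize Nat.factorial (2 * k + 2 * i + 6) = F3 at *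
  generalize Nat.factorial k = F4 at *
  generalize Nat.factorial (i + 1) = F5 at *
  push_cast
  have g1 : (2 * k + 2 * i + 6 + 1 + 1 : ℝ) ≠ 0 := by positivity
  have g2 : (2 * k + 2 * i + 6 + 1 : ℝ) ≠ 0 := by positivity
  have g3 : (2 * k + 2 * i + 7 : ℝ) ≠ 0 := by positivity
  have g4 : (2 * k + 2 * i + 8 : ℝ) ≠ 0 := by positivity
  have g5 : (k + 1 : ℝ) ≠ 0 := by positivity
  have g6 : (k + 1 + 1 : ℝ) ≠ 0 := by positivity
  have g7 : (k + 2 : ℝ) ≠ 0 := by positivity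
  have g8 : (i + 1 + 1 : ℝ) ≠ 0 := by positivity
  rw [pow_add 2 (i + 1) 2, pow_succ 2 i, pow_add 2 i 2]
  have g9 : (2 : ℝ) ^ i ≠ 0 := by positivity
  generalize (2 : ℝ) ^ i = T at *
  rw [div_div_div_eq, div_eq_div_iff (by simp [*]) (by simp [*])]
  ring

lemma C0_ratio' (N m : ℕ) (hN : Even N) (hm : Even m) (h2 : 2 ≤ m) (h : m + 2 ≤ N) :
    C0 N (m + 2) / C0 N m =
      (3 * N + m) * (N - m + 2) * (4 * (m : ℝ) ^ 2 - 1) /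
        (2 * ((N + m + 1) * (N + m + 2) * (m * (m - 1)))) := by
  obtain ⟨k, rfl⟩ : ∃ k, m = k + 2 := ⟨m - 2, by omega⟩
  obtain ⟨i, rfl⟩ : ∃ i, N = k + 2 + 2 * i + 2 := by
    obtain ⟨a, ha⟩ := hN
    obtain ⟨b, hb⟩ := hm
    exact ⟨a - b - 1, by omega⟩
  rw [C0_ratio]
  push_cast
  have g5 : (k + 2 - 1 : ℝ) ≠ 0 := by
    have : (0 : ℝ) ≤ k := k.cast_nonneg
    linarith
  rw [div_eq_div_iff (by positivity) (mul_ne_zero two_ne_zero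
    (mul_ne_zero (by positivity) (mul_ne_zero (by positivity) g5)))]
  ring

noncomputable def auxP (x e : ℝ) : ℝ :=
  let a := -2 * x + 6 * e - x ^ 2 * e + 2 * x * e ^ 2
  let d := 2 * x + 3 * e + e * ((x + e) * (x + 2 * e))
  (3 * -e + 4 * x ^ 2 * a + e * a * (-e) - 12 * (-x + x ^ 2 * d + e * d * (-x))) /
    (12 * ((1 + x * e + e ^ 2) * (1 + x * e + 2 * e ^ 2) * (x * (x - e))))

lemma aux_eq (s m : ℝ) (hs : 0 < s) (hm : 1 < m) :
    s * ((3 * s ^ 2 + m) * (s ^ 2 - m + 2) * (4 * m ^ 2 - 1) /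
        (2 * ((s ^ 2 + m + 1) * (s ^ 2 + m + 2) * (m * (m - 1)))) / 6 - 1) =
      auxP (m / s) (1 / s) := by
  have h1 : m - 1 ≠ 0 := by linarith
  have h0 : m ≠ 0 := by linarith
  have h2 : s ^ 2 + m + 1 ≠ 0 := by positivity
  have h3 : s ^ 2 + m + 2 ≠ 0 := by positivity
  have hs' := hs.ne'
  unfold auxP
  have k1 : 1 + m / s * (1 / s) + (1 / s) ^ 2 = (s ^ 2 + m + 1) / s ^ 2 := by field_simp
  have k2 : 1 + m / s * (1 / s) + 2 * (1 / s) ^ 2 = (s ^ 2 + m + 2) / s ^ 2 := by field_simp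
  have k3 : m / s - 1 / s = (m - 1) / s := by field_simp
  simp only
  rw [k1, k2, k3]
  field_simp
  ring

/-- Critical ratio scaling: if m_N is even and m_N/√N → β > 0 along even N, then
√N (C₀(N, m_N + 2)/(6 C₀(N, m_N)) - 1) → 1/β - (8/3)β along even N. -/
theorem critical_ratio_scaling (β : ℝ) (hβ : 0 < β) (m : ℕ → ℕ)
    (hmeven : ∀ N : ℕ, Even (m N))
    (hm : Filter.Tendsto (fun N : ℕ => ((m N : ℝ)) / Real.sqrt N) evenAtTop (nhds β)) :
    Filter.Tendsto
      (fun N : ℕ => Real.sqrt N * (C0 N (m N + 2) / (6 * C0 N (m N)) - 1))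
      evenAtTop (nhds (1 / β - (8 / 3) * β)) := by
  have hle : evenAtTop ≤ atTop := inf_le_left
  have hev : ∀ᶠ N in evenAtTop, Even N :=
    (mem_inf_of_right (mem_principal_self _) : {N | Even N} ∈ evenAtTop)
  have hs : Tendsto (fun N : ℕ => Real.sqrt N) evenAtTop atTop :=
    (Real.tendsto_sqrt_atTop.comp tendsto_natCast_atTop_atTop).mono_left hle
  have he : Tendsto (fun N : ℕ => 1 / Real.sqrt N) evenAtTop (nhds 0) := by
    simp only [one_div]
    exact hs.inv_tendsto_atTop
  have hP : Tendsto (fun N : ℕ => auxP ((m N : ℝ) / Real.sqrt N) (1 / Real.sqrt N)) evenAtTop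
      (nhds (1 / β - (8 / 3) * β)) := by
    have hc : ContinuousAt (fun p : ℝ × ℝ => auxP p.1 p.2) (β, 0) := by
      unfold auxP
      apply ContinuousAt.div
      · fun_prop
      · fun_prop
      · simp [hβ.ne']
    have hv : auxP β 0 = 1 / β - (8 / 3) * β := by
      unfold auxP
      have := hβ.ne'
      simp
      field_simp
      ring
    rw [← hv]
    have hpair := hm.prodMk_nhds he
    have hc' : Tendsto (fun p : ℝ × ℝ => auxP p.1 p.2) (nhds (β, 0)) (nhds (auxP β 0)) := hc
    generalize auxP = Q at hc' ⊢
    exact Tendsto.comp hc' hpair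
  refine hP.congr' ?_
  have hx1 := hm.eventually (lt_mem_nhds (half_lt_self hβ))
  have hx2 := hm.eventually (gt_mem_nhds (lt_add_one β))
  have hs1 := hs.eventually_ge_atTop (4 / β + β + 4)
  filter_upwards [hev, hx1, hx2, hs1] with N hN h1 h2 h3
  have hb : 0 < 4 / β := by positivity
  have hspos : 0 < Real.sqrt N := by linarith
  have hsq : Real.sqrt N ^ 2 = N := Real.sq_sqrt N.cast_nonneg
  rw [lt_div_iff₀ hspos] at h1
  rw [div_lt_iff₀ hspos] at h2
  have hm2 : (2 : ℝ) ≤ m N := by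
    have : 4 / β * β = 4 := by field_simp
    nlinarith
  have hmN : (m N : ℝ) + 2 ≤ N := by
    rw [← hsq]; nlinarith
  have hm2' : 2 ≤ m N := by exact_mod_cast hm2
  have hmN' : m N + 2 ≤ N := by exact_mod_cast hmN
  rw [← aux_eq _ _ hspos (by linarith), hsq, mul_comm 6, ← div_div (C0 N (m N + 2)),
    C0_ratio' N (m N) hN (hmeven N) hm2' hmN']
end
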